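/- arXiv:1111.3145 — 2 statements merged into one kernel-verified Lean document; each statement's English description precedes it below -/
import Mathlib

section
/- Let α, β > -1 and ε, δ ≥ 0 with α ≥ -ε/2 and β ≥ -δ/2. Define Φ_{ε,δ}(x) = (1-x)^{ε/2}(1+x)^{δ/2}. Then for all x, y ∈ [-1,1] and t > 0, Φ_{ε,δ}(x)Φ_{ε,δ}(y) G_t^{(α+ε, β+δ)}(x,y) ≤ exp( ((ε+δ)/2)(α+β+1+(ε+δ)/2) t ) · G_t^{(α,β)}(x,y), where G_t^{(α,β)} denotes the Jacobi heat kernel of type (α,β). -/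
open Real MeasureTheory

/-- Jacobi polynomial of type (a,b) and degree n, via the Rodrigues formula. -/
noncomputable def jacobiP (a b : ℝ) (n : ℕ) (x : ℝ) : ℝ :=
  ((-1 : ℝ) ^ n / ((2 : ℝ) ^ n * (n.factorial : ℝ))) * (1 - x) ^ (-a) * (1 + x) ^ (-b) *
    iteratedDeriv n (fun y : ℝ => (1 - y) ^ (a + (n : ℝ)) * (1 + y) ^ (b + (n : ℝ))) x

/-- The L²((1-x)^a(1+x)^b dx) normalizing constant of the Jacobi polynomials. -/
noncomputable def hJacobi (a b : ℝ) (n : ℕ) : ℝ :=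
  ∫ x in Set.Icc (-1 : ℝ) 1, (jacobiP a b n x) ^ 2 * (1 - x) ^ a * (1 + x) ^ b

/-- The Jacobi heat kernel G_t^{(a,b)}(x,y). -/
noncomputable def jacobiHeat (a b : ℝ) (t x y : ℝ) : ℝ :=
  ∑' n : ℕ, Real.exp (-t * (n : ℝ) * ((n : ℝ) + a + b + 1)) *
    jacobiP a b n x * jacobiP a b n y / hJacobi a b n

section JacobiAlgebra

open Polynomial

/-- The operator `R ↦ (1-x)^(1-A) (1+x)^(1-B) * d/dx ((1-x)^A (1+x)^B R)` on polynomials. -/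
noncomputable def jacobiOp (A B : ℝ) : ℝ[X] →ₗ[ℝ] ℝ[X] :=
  LinearMap.mulLeft ℝ (C (-A) * (1 + X) + C B * (1 - X)) +
    LinearMap.mulLeft ℝ (1 - X ^ 2) ∘ₗ derivative

lemma jacobiOp_apply (A B : ℝ) (R : ℝ[X]) :
    jacobiOp A B R = (C (-A) * (1 + X) + C B * (1 - X)) * R + (1 - X ^ 2) * derivative R := rfl

lemma eval_jacobiOp (A B : ℝ) (R : ℝ[X]) (x : ℝ) :
    (jacobiOp A B R).eval x =
      (-A * (1 + x) + B * (1 - x)) * R.eval x + (1 - x ^ 2) * (derivative R).eval x := by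
  simp [jacobiOp_apply]

lemma derivative_jacobiOp (A B : ℝ) (R : ℝ[X]) :
    derivative (jacobiOp A B R) =
      jacobiOp (A + 1) (B + 1) (derivative R) - C (A + B) * R := by
  simp only [jacobiOp_apply, derivative_mul, derivative_add, derivative_sub, derivative_C,
    derivative_X, derivative_one, derivative_X_pow, C_neg, C_add, C_1, derivative_neg]
  simp only [Nat.cast_ofNat, map_ofNat, Nat.add_one_sub_one, pow_one]
  ring

/-- Jacobi polynomials without the factor `(-1)^n / (2^n n!)`. -/
noncomputable def jacobiAux : ℝ → ℝ → ℕ → ℝ[X]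
  | _, _, 0 => 1
  | a, b, n + 1 => jacobiOp (a + 1) (b + 1) (jacobiAux (a + 1) (b + 1) n)

/-- The Jacobi differential operator on polynomials. -/
noncomputable def jacobiDiff (a b : ℝ) : ℝ[X] →ₗ[ℝ] ℝ[X] :=
  jacobiOp (a + 1) (b + 1) ∘ₗ derivative

lemma jacobiDiff_apply (a b : ℝ) (p : ℝ[X]) :
    jacobiDiff a b p = jacobiOp (a + 1) (b + 1) (derivative p) := rfl

lemma jacobiDiff_jacobiAux (n : ℕ) : ∀ a b : ℝ, jacobiDiff a b (jacobiAux a b n) =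
    (-(n * (n + a + b + 1) : ℝ)) • jacobiAux a b n := by
  induction n with
  | zero => intro a b; simp [jacobiAux, jacobiDiff]
  | succ n ih =>
    intro a b
    have h := ih (a + 1) (b + 1)
    rw [jacobiDiff_apply] at h
    rw [jacobiAux, jacobiDiff_apply, derivative_jacobiOp, h, ← smul_eq_C_mul, ← sub_smul, map_smul]
    congr 1
    push_cast
    ring

lemma natDegree_jacobiOp_le (A B : ℝ) {R : ℝ[X]} {n : ℕ} (hR : R.natDegree ≤ n) :
    (jacobiOp A B R).natDegree ≤ n + 1 := by
  rw [natDegree_le_iff_coeff_eq_zero] at hR ⊢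
  intro k hk
  obtain ⟨k, rfl⟩ : ∃ j, k = j + 2 := ⟨k - 2, by omega⟩
  have e : jacobiOp A B R = C (B - A) * R - C (A + B) * (X * R) + derivative R
      - X * (X * derivative R) := by
    simp only [jacobiOp_apply, C_neg, C_sub, C_add]; ring
  rw [e]
  simp only [coeff_add, coeff_sub, coeff_C_mul, coeff_X_mul, coeff_derivative]
  rw [hR (k + 2) (by omega), hR (k + 1) (by omega), hR (k + 2 + 1) (by omega)]
  simp

lemma coeff_jacobiOp (A B : ℝ) {R : ℝ[X]} {n : ℕ} (hR : R.natDegree ≤ n) :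
    (jacobiOp A B R).coeff (n + 1) = -(A + B + n) * R.coeff n := by
  rw [natDegree_le_iff_coeff_eq_zero] at hR
  have e : jacobiOp A B R = C (B - A) * R - C (A + B) * (X * R) + derivative R
      - X * (X * derivative R) := by
    simp only [jacobiOp_apply, C_neg, C_sub, C_add]; ring
  rw [e]
  simp only [coeff_add, coeff_sub, coeff_C_mul, coeff_X_mul, coeff_derivative]
  rw [hR (n + 1) (by omega), hR (n + 1 + 1) (by omega)]
  cases n with
  | zero => simp; ring
  | succ m => simp only [coeff_X_mul, coeff_derivative]; push_cast; ring

lemma natDegree_jacobiAux_le (n : ℕ) : ∀ a b : ℝ, (jacobiAux a b n).natDegree ≤ n := by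
  induction n with
  | zero => intro a b; simp [jacobiAux]
  | succ n ih => intro a b; exact natDegree_jacobiOp_le _ _ (ih _ _)

lemma pow_le_coeff_jacobiAux {σ : ℝ} (hσ : 0 < σ) (n : ℕ) : ∀ a b : ℝ, σ ≤ a + b + 2 →
    σ ^ n ≤ (-1) ^ n * (jacobiAux a b n).coeff n := by
  induction n with
  | zero => intro a b _; simp [jacobiAux]
  | succ n ih =>
    intro a b h
    have h1 := ih (a + 1) (b + 1) (by linarith)
    rw [jacobiAux, coeff_jacobiOp _ _ (natDegree_jacobiAux_le n _ _)]
    have hn : (0 : ℝ) ≤ n := n.cast_nonneg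
    calc σ ^ (n + 1) = σ * σ ^ n := by ring
      _ ≤ (a + 1 + (b + 1) + n) * ((-1) ^ n * (jacobiAux (a + 1) (b + 1) n).coeff n) := by
          apply mul_le_mul _ h1 (by positivity) <;> linarith
      _ = _ := by ring

/-- The Jacobi polynomials as a polynomial sequence. -/
noncomputable def jacobiSeq (a b : ℝ) (h : 0 < a + b + 2) : Polynomial.Sequence ℝ where
  elems' := jacobiAux a b
  degree_eq' n := by
    have h1 := pow_le_coeff_jacobiAux h n a b le_rfl
    have h2 : (jacobiAux a b n).coeff n ≠ 0 := by
      intro h0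
      rw [h0, mul_zero] at h1
      exact absurd (pow_pos h n) (not_lt.2 h1)
    exact degree_eq_of_le_of_coeff_ne_zero
      (natDegree_le_iff_degree_le.1 (natDegree_jacobiAux_le n a b)) h2

lemma exists_eq_sum_jacobiAux {a b : ℝ} (h : 0 < a + b + 2) (p : ℝ[X]) :
    ∃ (N : ℕ) (c : ℕ → ℝ), (∀ n, N ≤ n → c n = 0) ∧
      p = ∑ n ∈ Finset.range N, c n • jacobiAux a b n := by
  have hs := (jacobiSeq a b h).span fun i => by
    simp
  have hp : p ∈ Submodule.span ℝ (Set.range (jacobiSeq a b h)) := hs ▸ Submodule.mem_top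
  obtain ⟨c, hc⟩ := Finsupp.mem_span_range_iff_exists_finsupp.1 hp
  obtain ⟨N, hN⟩ := c.support.exists_nat_subset_range
  refine ⟨N, c, fun n hn => ?_, ?_⟩
  · by_contra h0
    have := hN (Finsupp.mem_support_iff.2 h0)
    rw [Finset.mem_range] at this
    omega
  · rw [← hc]
    exact Finsupp.sum_of_support_subset _ hN _ (by simp)

/-- The `ℓ¹` norm of the first `M` coefficients. -/
noncomputable def coeffNorm (M : ℕ) (R : ℝ[X]) : ℝ := ∑ i ∈ Finset.range M, |R.coeff i|

lemma coeffNorm_nonneg (M : ℕ) (R : ℝ[X]) : 0 ≤ coeffNorm M R :=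
  Finset.sum_nonneg fun _ _ => abs_nonneg _

lemma coeffNorm_add_le (M : ℕ) (R Q : ℝ[X]) :
    coeffNorm M (R + Q) ≤ coeffNorm M R + coeffNorm M Q := by
  rw [coeffNorm, coeffNorm, coeffNorm, ← Finset.sum_add_distrib]
  exact Finset.sum_le_sum fun i _ => by rw [coeff_add]; exact abs_add_le _ _

lemma coeffNorm_C_mul (M : ℕ) (c : ℝ) (R : ℝ[X]) :
    coeffNorm M (C c * R) = |c| * coeffNorm M R := by
  simp [coeffNorm, Finset.mul_sum, abs_mul]

lemma coeffNorm_X_mul_le (M : ℕ) (R : ℝ[X]) : coeffNorm M (X * R) ≤ coeffNorm M R := by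
  cases M with
  | zero => simp [coeffNorm]
  | succ M =>
    rw [coeffNorm, coeffNorm, Finset.sum_range_succ', Finset.sum_range_succ]
    simp only [coeff_X_mul, coeff_X_mul_zero, abs_zero, add_zero]
    linarith [abs_nonneg (R.coeff M)]

lemma coeffNorm_derivative_le {M n : ℕ} {R : ℝ[X]} (hR : R.natDegree ≤ n) (hn : n < M) :
    coeffNorm M (derivative R) ≤ n * coeffNorm M R := by
  have hR' := natDegree_le_iff_coeff_eq_zero.1 hR
  have h1 : coeffNorm M (derivative R) ≤
      ∑ i ∈ Finset.range M, n * |R.coeff (i + 1)| := by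
    apply Finset.sum_le_sum
    intro i _
    rw [coeff_derivative, abs_mul, mul_comm]
    by_cases hi : i + 1 ≤ n
    · gcongr
      rw [abs_of_nonneg (by positivity)]
      exact_mod_cast hi
    · rw [hR' _ (by omega)]; simp
  refine h1.trans ?_
  rw [← Finset.mul_sum]
  gcongr
  have := Finset.sum_range_succ' (fun i => |R.coeff i|) M
  rw [Finset.sum_range_succ, hR' M (by omega), abs_zero, add_zero] at this
  rw [coeffNorm, this]
  linarith [abs_nonneg (R.coeff 0)]

lemma abs_eval_le_coeffNorm {M : ℕ} {R : ℝ[X]} (hR : R.natDegree < M) {x : ℝ} (hx : |x| ≤ 1) :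
    |R.eval x| ≤ coeffNorm M R := by
  rw [eval_eq_sum_range' hR, coeffNorm]
  refine (Finset.abs_sum_le_sum_abs _ _).trans (Finset.sum_le_sum fun i _ => ?_)
  rw [abs_mul, abs_pow]
  exact mul_le_of_le_one_right (abs_nonneg _) (pow_le_one₀ (abs_nonneg _) hx)

lemma coeffNorm_jacobiOp_le {A B D : ℝ} (hA : |A| ≤ D) (hB : |B| ≤ D) {M n : ℕ} {R : ℝ[X]}
    (hR : R.natDegree ≤ n) (hnM : n < M) (hn : n ≤ D) :
    coeffNorm M (jacobiOp A B R) ≤ 6 * D * coeffNorm M R := by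
  have e : jacobiOp A B R = C (B - A) * R + C (-(A + B)) * (X * R) + derivative R
      + C (-1) * (X * (X * derivative R)) := by
    simp only [jacobiOp_apply, C_neg, C_sub, C_add, C_1]; ring
  have hD : 0 ≤ D := (abs_nonneg A).trans hA
  have h0 := coeffNorm_nonneg M R
  have hd := (coeffNorm_derivative_le hR hnM).trans (mul_le_mul_of_nonneg_right hn h0)
  have hx := coeffNorm_X_mul_le M R
  have hxx := (coeffNorm_X_mul_le M (X * derivative R)).trans (coeffNorm_X_mul_le M _)
  have hs : |B - A| ≤ 2 * D := (abs_sub B A).trans (by linarith)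
  have ht : |-(A + B)| ≤ 2 * D := by rw [abs_neg]; exact (abs_add_le A B).trans (by linarith)
  rw [e]
  refine (coeffNorm_add_le _ _ _).trans ?_
  refine (add_le_add_left ((coeffNorm_add_le _ _ _).trans
    (add_le_add_left (coeffNorm_add_le _ _ _) _)) _).trans ?_
  rw [coeffNorm_C_mul, coeffNorm_C_mul, coeffNorm_C_mul]
  have h1 := mul_le_mul_of_nonneg_right hs h0
  have h2 := mul_le_mul ht hx (coeffNorm_nonneg _ _) (by positivity)
  simp only [abs_neg, abs_one, one_mul] at *
  linarith

lemma coeffNorm_jacobiAux_le (D : ℝ) (M n : ℕ) : n < M → ∀ a b : ℝ, |a| + n ≤ D → |b| + n ≤ D →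
    coeffNorm M (jacobiAux a b n) ≤ (6 * D) ^ n := by
  induction n with
  | zero =>
    intro hM a b _ _
    rw [coeffNorm, Finset.sum_eq_single_of_mem 0 (by simpa using hM)]
    · simp [jacobiAux]
    · intro i _ hi; simp [jacobiAux, coeff_one, hi]
  | succ n ih =>
    intro hM a b ha hb
    push_cast at ha hb
    have ha1 : |a + 1| ≤ |a| + 1 := by simpa using abs_add_le a 1
    have hb1 : |b + 1| ≤ |b| + 1 := by simpa using abs_add_le b 1
    have hn : (0 : ℝ) ≤ n := n.cast_nonneg
    have hD : 0 ≤ D := by linarith [abs_nonneg a]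
    rw [jacobiAux]
    refine (coeffNorm_jacobiOp_le (D := D) (by linarith) (by linarith)
      (natDegree_jacobiAux_le n _ _) (by omega) (by linarith [abs_nonneg a])).trans ?_
    rw [pow_succ']
    gcongr
    exact ih (by omega) _ _ (by linarith) (by linarith)

/-- A crude uniform bound on `[-1,1]`, sufficient for the convergence of the heat kernel series. -/
lemma abs_eval_jacobiAux_le (a b : ℝ) (n : ℕ) {x : ℝ} (hx : x ∈ Set.Icc (-1 : ℝ) 1) :
    |(jacobiAux a b n).eval x| ≤ (6 * (|a| + |b| + n)) ^ n :=
  (abs_eval_le_coeffNorm (Nat.lt_succ_of_le (natDegree_jacobiAux_le n a b))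
    (abs_le.2 ⟨hx.1, hx.2⟩)).trans
    (coeffNorm_jacobiAux_le _ _ n n.lt_succ_self a b (by linarith [abs_nonneg b])
      (by linarith [abs_nonneg a]))

end JacobiAlgebra

section JacobiWeight

open Polynomial

/-- The Jacobi weight. -/
noncomputable def jacobiW (a b x : ℝ) : ℝ := (1 - x) ^ a * (1 + x) ^ b

lemma jacobiW_nonneg (a b : ℝ) {x : ℝ} (hx : x ∈ Set.Icc (-1 : ℝ) 1) : 0 ≤ jacobiW a b x :=
  mul_nonneg (rpow_nonneg (by linarith [hx.2]) _) (rpow_nonneg (by linarith [hx.1]) _)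

lemma jacobiW_pos (a b : ℝ) {x : ℝ} (hx : x ∈ Set.Ioo (-1 : ℝ) 1) : 0 < jacobiW a b x :=
  mul_pos (rpow_pos_of_pos (by linarith [hx.2]) _) (rpow_pos_of_pos (by linarith [hx.1]) _)

lemma jacobiW_mul (a b c d : ℝ) {x : ℝ} (hx : x ∈ Set.Ioo (-1 : ℝ) 1) :
    jacobiW a b x * jacobiW c d x = jacobiW (a + c) (b + d) x := by
  have h1 : 0 < 1 - x := by linarith [hx.2]
  have h2 : 0 < 1 + x := by linarith [hx.1]
  rw [jacobiW, jacobiW, jacobiW, rpow_add h1, rpow_add h2]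
  ring

lemma jacobiW_one_one (x : ℝ) : jacobiW 1 1 x = 1 - x ^ 2 := by
  rw [jacobiW, rpow_one, rpow_one]; ring

lemma continuous_jacobiW {a b : ℝ} (ha : 0 ≤ a) (hb : 0 ≤ b) : Continuous (jacobiW a b) :=
  ((continuous_const.sub continuous_id).rpow_const fun _ => Or.inr ha).mul
    ((continuous_const.add continuous_id).rpow_const fun _ => Or.inr hb)

lemma continuousOn_jacobiW (a b : ℝ) : ContinuousOn (jacobiW a b) (Set.Ioo (-1) 1) := by
  intro x hx
  have h1 : (1 - x) ≠ 0 := by linarith [hx.2]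
  have h2 : (1 + x) ≠ 0 := by linarith [hx.1]
  exact (((continuousAt_const.sub continuousAt_id).rpow_const (Or.inl h1)).mul
    ((continuousAt_const.add continuousAt_id).rpow_const (Or.inl h2))).continuousWithinAt

lemma intervalIntegrable_jacobiW {a b : ℝ} (ha : -1 < a) (hb : -1 < b) :
    IntervalIntegrable (jacobiW a b) volume (-1) 1 := by
  have h1 : IntervalIntegrable (jacobiW a b) volume 0 1 := by
    have h : IntervalIntegrable (fun x : ℝ => (1 - x) ^ a) volume 0 1 := by
      have := (intervalIntegral.intervalIntegrable_rpow' (a := 0) (b := 1) ha).comp_sub_left 1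
      simpa using this.symm
    refine h.mul_continuousOn fun x hx => ?_
    rw [Set.uIcc_of_le zero_le_one] at hx
    exact ((continuousAt_const.add continuousAt_id).rpow_const
      (Or.inl (by simp; linarith [hx.1]))).continuousWithinAt
  have h2 : IntervalIntegrable (jacobiW a b) volume (-1) 0 := by
    have h : IntervalIntegrable (fun x : ℝ => (1 + x) ^ b) volume (-1) 0 := by
      have := (intervalIntegral.intervalIntegrable_rpow' (a := 0) (b := 1) hb).comp_add_left 1
      simpa using this
    refine h.continuousOn_mul fun x hx => ?_
    rw [Set.uIcc_of_le (by norm_num)] at hx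
    exact ((continuousAt_const.sub continuousAt_id).rpow_const
      (Or.inl (by simp; linarith [hx.2]))).continuousWithinAt
  exact h2.trans h1

lemma hasDerivAt_jacobiW_mul (A B : ℝ) (R : ℝ[X]) {x : ℝ} (hx : x ∈ Set.Ioo (-1 : ℝ) 1) :
    HasDerivAt (fun x => jacobiW A B x * R.eval x)
      (jacobiW (A - 1) (B - 1) x * (jacobiOp A B R).eval x) x := by
  have h1 : 0 < 1 - x := by linarith [hx.2]
  have h2 : 0 < 1 + x := by linarith [hx.1]
  have d1 := ((hasDerivAt_id x).const_sub 1).rpow_const (p := A) (Or.inl h1.ne')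
  have d2 := ((hasDerivAt_id x).const_add 1).rpow_const (p := B) (Or.inl h2.ne')
  refine ((d1.mul d2).mul (R.hasDerivAt x)).congr_deriv ?_
  simp only [id, jacobiW, eval_jacobiOp, Pi.mul_apply]
  rw [show (1 - x) ^ A = (1 - x) ^ (A - 1) * (1 - x) by
      rw [rpow_sub_one h1.ne', div_mul_cancel₀ _ h1.ne'],
    show (1 + x) ^ B = (1 + x) ^ (B - 1) * (1 + x) by
      rw [rpow_sub_one h2.ne', div_mul_cancel₀ _ h2.ne']]
  ring

lemma intervalIntegrable_jacobiW_mul {a b : ℝ} (ha : -1 < a) (hb : -1 < b) (p : ℝ[X]) :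
    IntervalIntegrable (fun x => jacobiW a b x * p.eval x) volume (-1) 1 :=
  (intervalIntegrable_jacobiW ha hb).mul_continuousOn p.continuous.continuousOn

/-- Integration of polynomials against the Jacobi weight. -/
noncomputable def jacobiInt {a b : ℝ} (ha : -1 < a) (hb : -1 < b) : ℝ[X] →ₗ[ℝ] ℝ where
  toFun p := ∫ x in (-1)..1, jacobiW a b x * p.eval x
  map_add' p q := by
    rw [← intervalIntegral.integral_add (intervalIntegrable_jacobiW_mul ha hb p)
      (intervalIntegrable_jacobiW_mul ha hb q)]
    simp only [eval_add, mul_add]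
  map_smul' c p := by
    rw [RingHom.id_apply, smul_eq_mul, ← intervalIntegral.integral_const_mul]
    congr 1; ext x
    rw [eval_smul, smul_eq_mul]; ring

variable {a b : ℝ} (ha : -1 < a) (hb : -1 < b)

lemma jacobiInt_apply (p : ℝ[X]) :
    jacobiInt ha hb p = ∫ x in (-1)..1, jacobiW a b x * p.eval x := rfl

lemma intervalIntegral_congr_Ioo {f g : ℝ → ℝ} (h : ∀ x ∈ Set.Ioo (-1 : ℝ) 1, f x = g x) :
    ∫ x in (-1)..1, f x = ∫ x in (-1)..1, g x := by
  rw [intervalIntegral.integral_of_le (by norm_num), intervalIntegral.integral_of_le (by norm_num),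
    integral_Ioc_eq_integral_Ioo, integral_Ioc_eq_integral_Ioo]
  exact setIntegral_congr_fun measurableSet_Ioo h

lemma jacobiInt_add_one (ha' : -1 < a + 1) (hb' : -1 < b + 1) (p : ℝ[X]) :
    jacobiInt ha' hb' p = jacobiInt ha hb ((1 - X ^ 2) * p) := by
  refine intervalIntegral_congr_Ioo fun x hx => ?_
  rw [← jacobiW_mul a b 1 1 hx, jacobiW_one_one]
  simp
  ring

lemma jacobiInt_jacobiOp (R : ℝ[X]) : jacobiInt ha hb (jacobiOp (a + 1) (b + 1) R) = 0 := by
  have h := intervalIntegral.integral_eq_sub_of_hasDerivAt_of_le (a := -1) (b := 1) (by norm_num)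
    ((continuous_jacobiW (a := a + 1) (b := b + 1) (by linarith) (by linarith)).mul
      R.continuous).continuousOn
    (fun x hx => hasDerivAt_jacobiW_mul (a + 1) (b + 1) R hx)
    (by
      simpa only [add_sub_cancel_right] using
        intervalIntegrable_jacobiW_mul ha hb (jacobiOp (a + 1) (b + 1) R))
  simp only [add_sub_cancel_right] at h
  rw [jacobiInt_apply, h]
  have h1 : a + 1 ≠ 0 := by linarith
  have h2 : b + 1 ≠ 0 := by linarith
  simp [jacobiW, zero_rpow h1, zero_rpow h2]

lemma jacobiOp_mul (A B : ℝ) (R q : ℝ[X]) :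
    jacobiOp A B (R * q) = jacobiOp A B R * q + (1 - X ^ 2) * (R * derivative q) := by
  simp only [jacobiOp_apply, derivative_mul]; ring

lemma jacobiInt_jacobiOp_mul (R q : ℝ[X]) :
    jacobiInt ha hb (jacobiOp (a + 1) (b + 1) R * q) =
      -jacobiInt ha hb ((1 - X ^ 2) * (R * derivative q)) := by
  have h := jacobiInt_jacobiOp ha hb (R * q)
  rw [jacobiOp_mul, map_add] at h
  linarith

/-- Repeated integration by parts in Rodrigues' formula. -/
lemma jacobiInt_jacobiAux_mul (n : ℕ) : ∀ {a b : ℝ} (ha : -1 < a) (hb : -1 < b) (q : ℝ[X]),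
    jacobiInt ha hb (jacobiAux a b n * q) =
      (-1) ^ n * jacobiInt ha hb ((1 - X ^ 2) ^ n * derivative^[n] q) := by
  induction n with
  | zero => intro a b ha hb q; simp [jacobiAux]
  | succ n ih =>
    intro a b ha hb q
    have ha' : -1 < a + 1 := by linarith
    have hb' : -1 < b + 1 := by linarith
    rw [jacobiAux, jacobiInt_jacobiOp_mul, ← jacobiInt_add_one ha hb ha' hb', ih ha' hb',
      jacobiInt_add_one ha hb ha' hb', Function.iterate_succ_apply, pow_succ' (1 - X ^ 2 : ℝ[X]) n,
      pow_succ (-1 : ℝ) n, mul_assoc (1 - X ^ 2 : ℝ[X])]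
    ring

lemma jacobiInt_jacobiAux_mul_of_lt {m n : ℕ} (h : m < n) :
    jacobiInt ha hb (jacobiAux a b n * jacobiAux a b m) = 0 := by
  rw [jacobiInt_jacobiAux_mul, iterate_derivative_eq_zero
    ((natDegree_jacobiAux_le m a b).trans_lt h)]
  simp

lemma jacobiInt_jacobiAux_mul_of_ne {m n : ℕ} (h : m ≠ n) :
    jacobiInt ha hb (jacobiAux a b n * jacobiAux a b m) = 0 := by
  rcases lt_or_gt_of_ne h with h | h
  · exact jacobiInt_jacobiAux_mul_of_lt ha hb h
  · rw [mul_comm]; exact jacobiInt_jacobiAux_mul_of_lt ha hb h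

lemma iterate_derivative_jacobiAux (n : ℕ) (a b : ℝ) :
    derivative^[n] (jacobiAux a b n) = C (n.factorial * (jacobiAux a b n).coeff n) := by
  ext m
  rw [coeff_iterate_derivative, coeff_C]
  split_ifs with h
  · subst h; simp [Nat.descFactorial_self]
  · rw [natDegree_le_iff_coeff_eq_zero.1 (natDegree_jacobiAux_le n a b) (m + n) (by omega),
      smul_zero]

/-- A crude lower bound for the squared norms. -/
lemma exists_le_jacobiInt_jacobiAux_sq :
    ∃ c > 0, ∃ r > 0, ∀ n : ℕ, c * r ^ n ≤ jacobiInt ha hb (jacobiAux a b n * jacobiAux a b n) := by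
  have hσ : 0 < a + b + 2 := by linarith
  have hsub : Set.uIcc (-(1 / 2) : ℝ) (1 / 2) ⊆ Set.Ioo (-1) 1 := by
    rw [Set.uIcc_of_le (by norm_num)]
    intro x hx
    constructor <;> linarith [hx.1, hx.2]
  have hI : IntervalIntegrable (jacobiW a b) volume (-(1 / 2)) (1 / 2) :=
    ((continuousOn_jacobiW a b).mono hsub).intervalIntegrable
  have hκ : 0 < ∫ x in (-(1 / 2) : ℝ)..(1 / 2), jacobiW a b x :=
    intervalIntegral.intervalIntegral_pos_of_pos_on hI
      (fun x hx => jacobiW_pos a b ⟨by linarith [hx.1], by linarith [hx.2]⟩) (by norm_num)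
  refine ⟨_, hκ, 3 / 4 * (a + b + 2), by positivity, fun n => ?_⟩
  set κ := ∫ x in (-(1 / 2) : ℝ)..(1 / 2), jacobiW a b x
  have h1 : κ * (3 / 4) ^ n ≤ jacobiInt ha hb ((1 - X ^ 2) ^ n) := by
    rw [jacobiInt_apply]
    calc κ * (3 / 4) ^ n
        = ∫ x in (-(1 / 2) : ℝ)..(1 / 2), jacobiW a b x * (3 / 4) ^ n :=
          (intervalIntegral.integral_mul_const _ _).symm
      _ ≤ ∫ x in (-(1 / 2) : ℝ)..(1 / 2), jacobiW a b x * eval x ((1 - X ^ 2) ^ n) := by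
          have hs := (continuousOn_jacobiW a b).mono hsub
          refine intervalIntegral.integral_mono_on (by norm_num)
            (hI.mul_const _) (hs.mul (Polynomial.continuous _).continuousOn).intervalIntegrable ?_
          intro x hx
          have : (3 / 4 : ℝ) ≤ 1 - x ^ 2 := by nlinarith [hx.1, hx.2]
          simp only [eval_pow, eval_sub, eval_one, eval_X]
          have := pow_le_pow_left₀ (by norm_num) this n
          exact mul_le_mul_of_nonneg_left this
            (jacobiW_nonneg a b ⟨by linarith [hx.1], by linarith [hx.2]⟩)
      _ ≤ _ := by
          refine intervalIntegral.integral_mono_interval (by norm_num) (by norm_num) (by norm_num)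
            ?_ (intervalIntegrable_jacobiW_mul ha hb _)
          refine (ae_restrict_iff' measurableSet_Ioc).2 (Filter.Eventually.of_forall ?_)
          intro x hx
          have hx' : x ∈ Set.Icc (-1 : ℝ) 1 := ⟨hx.1.le, hx.2⟩
          simp only [eval_pow, eval_sub, eval_one, eval_X, Pi.zero_apply]
          exact mul_nonneg (jacobiW_nonneg a b hx')
            (pow_nonneg (by nlinarith [hx.1, hx.2]) _)
  have h2 := pow_le_coeff_jacobiAux hσ n a b (by linarith)
  have h3 : (1 : ℝ) ≤ n.factorial := by exact_mod_cast Nat.one_le_iff_ne_zero.2 n.factorial_ne_zero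
  rw [jacobiInt_jacobiAux_mul, iterate_derivative_jacobiAux, mul_comm (_ ^ n) (C _),
    ← smul_eq_C_mul, map_smul, smul_eq_mul, mul_pow]
  have h4 : 0 ≤ κ * (3 / 4) ^ n := by positivity
  calc κ * ((3 / 4) ^ n * (a + b + 2) ^ n) = 1 * (a + b + 2) ^ n * (κ * (3 / 4) ^ n) := by ring
    _ ≤ n.factorial * ((-1) ^ n * (jacobiAux a b n).coeff n) *
        jacobiInt ha hb ((1 - X ^ 2) ^ n) := by
        have h5 := (pow_pos hσ n).le
        have h6 := h5.trans h2
        gcongr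
    _ = _ := by ring

lemma jacobiInt_jacobiAux_sq_pos (n : ℕ) :
    0 < jacobiInt ha hb (jacobiAux a b n * jacobiAux a b n) := by
  obtain ⟨c, hc, r, hr, h⟩ := exists_le_jacobiInt_jacobiAux_sq ha hb
  exact (by positivity : 0 < c * r ^ n).trans_le (h n)

end JacobiWeight

section JacobiFlow

open Polynomial

lemma sub_mul_deriv_nonneg_of_isMinOn {f : ℝ → ℝ} {f' x₀ y : ℝ} {s : Set ℝ} (hs : Convex ℝ s)
    (hx : x₀ ∈ s) (hy : y ∈ s) (hf : HasDerivAt f f' x₀) (hmin : IsMinOn f s x₀) :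
    0 ≤ (y - x₀) * f' := by
  have h := hmin.localize.hasFDerivWithinAt_nonneg hf.hasFDerivAt.hasFDerivWithinAt
    (sub_mem_posTangentConeAt_of_segment_subset (hs.segment_subset hx hy))
  simpa using h

lemma eval_derivative_derivative_nonneg {p : ℝ[X]} {x₀ : ℝ}
    (hmin : IsLocalMin (fun x => p.eval x) x₀) :
    0 ≤ (derivative (derivative p)).eval x₀ := by
  by_contra! h
  have e1 : deriv (fun x => p.eval x) = fun x => (derivative p).eval x := by
    ext x; exact p.deriv
  have e2 : deriv (deriv (fun x => p.eval x)) = fun x => (derivative (derivative p)).eval x := by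
    rw [e1]; ext x; exact (derivative p).deriv
  have hmax : IsLocalMax (fun x => p.eval x) x₀ :=
    isLocalMax_of_deriv_deriv_neg (by rw [e2]; exact h) hmin.deriv_eq_zero p.continuousAt
  have hc : (fun x => p.eval x) =ᶠ[nhds x₀] fun _ => p.eval x₀ := by
    filter_upwards [hmin, hmax] with x h1 h2 using le_antisymm h2 h1
  have h0 : deriv (deriv (fun x => p.eval x)) x₀ = 0 := by
    rw [hc.deriv.deriv_eq]; simp
  rw [e2] at h0
  exact h.ne h0

/-- At a minimum over `[-1,1]` the Jacobi operator is nonnegative, also at the endpoints. -/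
lemma eval_jacobiDiff_nonneg_of_isMinOn {a b : ℝ} (ha : -1 < a) (hb : -1 < b) {p : ℝ[X]} {x₀ : ℝ}
    (hx : x₀ ∈ Set.Icc (-1 : ℝ) 1) (hmin : IsMinOn (fun x => p.eval x) (Set.Icc (-1) 1) x₀) :
    0 ≤ (jacobiDiff a b p).eval x₀ := by
  have h1 := sub_mul_deriv_nonneg_of_isMinOn (convex_Icc (-1 : ℝ) 1) hx
    (Set.right_mem_Icc.2 (by norm_num)) (p.hasDerivAt x₀) hmin
  have h2 := sub_mul_deriv_nonneg_of_isMinOn (convex_Icc (-1 : ℝ) 1) hx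
    (Set.left_mem_Icc.2 (by norm_num)) (p.hasDerivAt x₀) hmin
  have h3 : 0 ≤ (1 - x₀ ^ 2) * (derivative (derivative p)).eval x₀ := by
    by_cases hx' : x₀ ∈ Set.Ioo (-1 : ℝ) 1
    · exact mul_nonneg (by nlinarith [hx.1, hx.2])
        (eval_derivative_derivative_nonneg (hmin.isLocalMin (Icc_mem_nhds hx'.1 hx'.2)))
    · have : x₀ ^ 2 = 1 := by
        rcases eq_or_lt_of_le hx.1 with h | h
        · rw [← h]; norm_num
        · rcases eq_or_lt_of_le hx.2 with h' | h'
          · rw [h']; norm_num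
          · exact absurd ⟨h, h'⟩ hx'
      rw [this]; simp
  rw [jacobiDiff_apply, eval_jacobiOp]
  have h4 := mul_nonneg (by linarith : 0 ≤ a + 1) h2
  have h5 := mul_nonneg (by linarith : 0 ≤ b + 1) h1
  linarith

/-- The Jacobi heat flow with initial value `∑ n < N, c n • J_n`. -/
noncomputable def jacobiFlow (a b : ℝ) (N : ℕ) (c : ℕ → ℝ) (s : ℝ) : ℝ[X] :=
  ∑ n ∈ Finset.range N, (exp (-(n * (n + a + b + 1)) * s) * c n) • jacobiAux a b n

lemma jacobiFlow_zero (a b : ℝ) (N : ℕ) (c : ℕ → ℝ) :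
    jacobiFlow a b N c 0 = ∑ n ∈ Finset.range N, c n • jacobiAux a b n := by
  simp [jacobiFlow]

lemma jacobiDiff_jacobiFlow (a b : ℝ) (N : ℕ) (c : ℕ → ℝ) (s : ℝ) :
    jacobiDiff a b (jacobiFlow a b N c s) =
      ∑ n ∈ Finset.range N, ((-(n * (n + a + b + 1))) *
        (exp (-(n * (n + a + b + 1)) * s) * c n)) • jacobiAux a b n := by
  rw [jacobiFlow, map_sum]
  refine Finset.sum_congr rfl fun n _ => ?_
  rw [map_smul, jacobiDiff_jacobiAux, smul_smul]
  congr 1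
  ring

lemma hasDerivAt_eval_jacobiFlow (a b : ℝ) (N : ℕ) (c : ℕ → ℝ) (s x : ℝ) :
    HasDerivAt (fun s => (jacobiFlow a b N c s).eval x)
      ((jacobiDiff a b (jacobiFlow a b N c s)).eval x) s := by
  rw [jacobiDiff_jacobiFlow]
  simp only [jacobiFlow, eval_finsetSum, eval_smul, smul_eq_mul]
  refine HasDerivAt.fun_sum fun n _ => ?_
  have h := (((hasDerivAt_id s).const_mul (-(n * (n + a + b + 1)))).exp.mul_const
    (c n)).mul_const ((jacobiAux a b n).eval x)
  refine h.congr_deriv ?_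
  simp only [id]
  ring

lemma continuous_eval_jacobiFlow (a b : ℝ) (N : ℕ) (c : ℕ → ℝ) :
    Continuous fun z : ℝ × ℝ => (jacobiFlow a b N c z.1).eval z.2 := by
  simp only [jacobiFlow, eval_finsetSum, eval_smul, smul_eq_mul]
  fun_prop

/-- The weak maximum principle: the Jacobi heat flow preserves positivity on `[-1,1]`. -/
lemma eval_jacobiFlow_nonneg {a b : ℝ} (ha : -1 < a) (hb : -1 < b) (N : ℕ) (c : ℕ → ℝ)
    (h0 : ∀ x ∈ Set.Icc (-1 : ℝ) 1, 0 ≤ (jacobiFlow a b N c 0).eval x) {t : ℝ} (ht : 0 ≤ t) :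
    ∀ x ∈ Set.Icc (-1 : ℝ) 1, 0 ≤ (jacobiFlow a b N c t).eval x := by
  have key : ∀ η > 0, ∀ x ∈ Set.Icc (-1 : ℝ) 1, 0 ≤ (jacobiFlow a b N c t).eval x + η * t := by
    intro η hη
    obtain ⟨⟨s, y⟩, ⟨hs, hy⟩, hmin⟩ := ((isCompact_Icc (a := 0) (b := t)).prod
      (isCompact_Icc (a := (-1 : ℝ)) (b := 1))).exists_isMinOn
      ⟨(0, 0), ⟨⟨le_rfl, ht⟩, by norm_num⟩⟩
      ((continuous_eval_jacobiFlow a b N c).add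
        (continuous_const.mul continuous_fst : Continuous fun z : ℝ × ℝ => η * z.1)).continuousOn
    have hmin' : ∀ s' ∈ Set.Icc 0 t, ∀ y' ∈ Set.Icc (-1 : ℝ) 1,
        (jacobiFlow a b N c s).eval y + η * s ≤ (jacobiFlow a b N c s').eval y' + η * s' :=
      fun s' hs' y' hy' => hmin (Set.mk_mem_prod hs' hy')
    change s ∈ Set.Icc 0 t at hs
    change y ∈ Set.Icc (-1 : ℝ) 1 at hy
    intro x hx
    refine le_trans ?_ (hmin' t ⟨ht, le_rfl⟩ x hx)
    rcases eq_or_lt_of_le hs.1 with h | h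
    · rw [← h]; simpa using h0 y hy
    · exfalso
      have hd := (hasDerivAt_eval_jacobiFlow a b N c s y).add ((hasDerivAt_id s).const_mul η)
      have h1 := sub_mul_deriv_nonneg_of_isMinOn (convex_Icc (0 : ℝ) t) hs
        (Set.left_mem_Icc.2 ht) hd (fun s' hs' => hmin' s' hs' y hy)
      have h2 := eval_jacobiDiff_nonneg_of_isMinOn ha hb (p := jacobiFlow a b N c s) hy
        (fun y' hy' => by have := hmin' s hs y' hy'; simpa using this)
      nlinarith
  intro x hx
  by_contra! hneg
  have h1 := key (-(jacobiFlow a b N c t).eval x / (2 * (t + 1))) (by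
    apply div_pos <;> linarith) x hx
  have h2 : -(jacobiFlow a b N c t).eval x / (2 * (t + 1)) * t
      ≤ -(jacobiFlow a b N c t).eval x / 2 := by
    rw [div_mul_eq_mul_div, div_le_div_iff₀ (by linarith) (by norm_num)]
    nlinarith
  linarith

end JacobiFlow

section JacobiComparison

open Polynomial

lemma jacobiInt_comparison_nonpos {A B e d : ℝ} (hA : 0 ≤ A) (hB : 0 ≤ B) (he : 0 ≤ e)
    (hd : 0 ≤ d) (hA' : -1 < A) (hB' : -1 < B) {u v : ℝ[X]}
    (hu : ∀ x ∈ Set.Icc (-1 : ℝ) 1, 0 ≤ u.eval x) (hv : ∀ x ∈ Set.Icc (-1 : ℝ) 1, 0 ≤ v.eval x) :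
    jacobiInt hA' hB' (-jacobiDiff (A - e) (B - d) u * v + u * jacobiDiff (A + e) (B + d) v
      - ((e + d) * (A + B + 1)) • (u * v)) ≤ 0 := by
  set R : ℝ[X] := (1 - X ^ 2) * (u * derivative v - derivative u * v)
    - (C e * (1 + X) - C d * (1 - X)) * (u * v) with hR
  have h := intervalIntegral.integral_le_sub_of_hasDeriv_right_of_le
    (a := -1) (b := 1) (g := fun x => jacobiW A B x * R.eval x) (by norm_num)
    ((continuous_jacobiW hA hB).mul R.continuous).continuousOn
    (fun x hx => (hasDerivAt_jacobiW_mul A B R hx).hasDerivWithinAt)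
    ((intervalIntegrable_iff_integrableOn_Icc_of_le (by norm_num)).1
      (intervalIntegrable_jacobiW_mul hA' hB' (-jacobiDiff (A - e) (B - d) u * v
        + u * jacobiDiff (A + e) (B + d) v - ((e + d) * (A + B + 1)) • (u * v))))
    (by
      intro x hx
      have h1 := jacobiW_mul (A - 1) (B - 1) 1 1 hx
      rw [sub_add_cancel, sub_add_cancel, jacobiW_one_one] at h1
      rw [← h1, mul_assoc]
      refine mul_le_mul_of_nonneg_left ?_ (jacobiW_pos _ _ hx).le
      have hx' := Set.Ioo_subset_Icc_self hx
      have h2 : 0 ≤ (2 * (e * A) * (1 + x) + 2 * (d * B) * (1 - x)) * (u.eval x * v.eval x) :=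
        mul_nonneg (add_nonneg
          (mul_nonneg (by positivity) (by linarith [hx.1]))
          (mul_nonneg (by positivity) (by linarith [hx.2])))
          (mul_nonneg (hu x hx') (hv x hx'))
      simp only [eval_add, eval_sub, eval_mul, eval_neg, eval_smul, smul_eq_mul, jacobiDiff_apply,
        eval_jacobiOp, hR, derivative_sub, derivative_mul, derivative_add, derivative_one,
        derivative_X, derivative_X_pow, derivative_C, eval_one, eval_X, eval_pow, eval_C,
        eval_zero, Nat.cast_ofNat, Nat.add_one_sub_one, pow_one]
      linarith)
  rw [jacobiInt_apply]
  refine h.trans ?_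
  have e1 : R.eval 1 = -(2 * e * (u.eval 1 * v.eval 1)) := by
    simp only [hR, eval_add, eval_sub, eval_mul, eval_one, eval_X, eval_pow, eval_C]; ring
  have e2 : R.eval (-1) = 2 * d * (u.eval (-1) * v.eval (-1)) := by
    simp only [hR, eval_add, eval_sub, eval_mul, eval_one, eval_X, eval_pow, eval_C]; ring
  have m1 : (1 : ℝ) ∈ Set.Icc (-1 : ℝ) 1 := by norm_num
  have m2 : (-1 : ℝ) ∈ Set.Icc (-1 : ℝ) 1 := by norm_num
  have h1 := mul_nonneg (jacobiW_nonneg A B m1) (mul_nonneg he (mul_nonneg (hu 1 m1) (hv 1 m1)))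
  have h2 := mul_nonneg (jacobiW_nonneg A B m2)
    (mul_nonneg hd (mul_nonneg (hu (-1) m2) (hv (-1) m2)))
  rw [e1, e2]
  linarith

lemma hasDerivAt_map_sum_smul_mul_sum_smul (Λ : ℝ[X] →ₗ[ℝ] ℝ) {M N : ℕ} {P Q : ℕ → ℝ[X]}
    {f g : ℕ → ℝ → ℝ} {f' g' : ℕ → ℝ} {s : ℝ} (hf : ∀ n, HasDerivAt (f n) (f' n) s)
    (hg : ∀ n, HasDerivAt (g n) (g' n) s) :
    HasDerivAt (fun s => Λ ((∑ m ∈ Finset.range M, f m s • P m) *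
        ∑ n ∈ Finset.range N, g n s • Q n))
      (Λ ((∑ m ∈ Finset.range M, f' m • P m) * (∑ n ∈ Finset.range N, g n s • Q n) +
        (∑ m ∈ Finset.range M, f m s • P m) * ∑ n ∈ Finset.range N, g' n • Q n)) s := by
  simp only [Finset.sum_mul_sum, smul_mul_smul_comm, map_add, map_sum, map_smul,
    ← Finset.sum_add_distrib, smul_eq_mul, ← add_mul]
  exact HasDerivAt.fun_sum fun m _ => HasDerivAt.fun_sum fun n _ =>
    ((hf m).mul (hg n)).mul_const _

lemma hasDerivAt_jacobiInt_jacobiFlow (Λ : ℝ[X] →ₗ[ℝ] ℝ) (a b a' b' : ℝ) (M N : ℕ)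
    (p q : ℕ → ℝ) (t s : ℝ) :
    HasDerivAt (fun s => Λ (jacobiFlow a b M p (t - s) * jacobiFlow a' b' N q s))
      (Λ (-jacobiDiff a b (jacobiFlow a b M p (t - s)) * jacobiFlow a' b' N q s +
        jacobiFlow a b M p (t - s) * jacobiDiff a' b' (jacobiFlow a' b' N q s))) s := by
  rw [jacobiDiff_jacobiFlow, jacobiDiff_jacobiFlow, ← Finset.sum_neg_distrib]
  simp only [← neg_smul]
  refine hasDerivAt_map_sum_smul_mul_sum_smul Λ (fun n => ?_) (fun n => ?_)
  · have h := (((hasDerivAt_id s).const_sub t).const_mul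
      (-(n * (n + a + b + 1)))).exp.mul_const (p n)
    refine h.congr_deriv ?_
    simp only [id]
    ring
  · have h := ((hasDerivAt_id s).const_mul (-(n * (n + a' + b' + 1)))).exp.mul_const (q n)
    refine h.congr_deriv ?_
    simp only [id]
    ring

/-- The comparison principle tested against polynomials. -/
lemma jacobiInt_jacobiFlow_comparison {A B e d : ℝ} (hA : 0 ≤ A) (hB : 0 ≤ B) (he : 0 ≤ e)
    (hd : 0 ≤ d) (ha : -1 < A - e) (hb : -1 < B - d) (hA' : -1 < A) (hB' : -1 < B)
    {M N : ℕ} {p q : ℕ → ℝ}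
    (hp : ∀ x ∈ Set.Icc (-1 : ℝ) 1, 0 ≤ (jacobiFlow (A - e) (B - d) M p 0).eval x)
    (hq : ∀ x ∈ Set.Icc (-1 : ℝ) 1, 0 ≤ (jacobiFlow (A + e) (B + d) N q 0).eval x)
    {t : ℝ} (ht : 0 ≤ t) :
    exp (-((e + d) * (A + B + 1)) * t) * jacobiInt hA' hB'
        (jacobiFlow (A - e) (B - d) M p 0 * jacobiFlow (A + e) (B + d) N q t) ≤
      jacobiInt hA' hB'
        (jacobiFlow (A - e) (B - d) M p t * jacobiFlow (A + e) (B + d) N q 0) := by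
  have hD : ∀ s, HasDerivAt (fun s => exp (-((e + d) * (A + B + 1)) * s) * jacobiInt hA' hB'
        (jacobiFlow (A - e) (B - d) M p (t - s) * jacobiFlow (A + e) (B + d) N q s)) _ s :=
    fun s => ((hasDerivAt_id s).const_mul (-((e + d) * (A + B + 1)))).exp.mul
      (hasDerivAt_jacobiInt_jacobiFlow (jacobiInt hA' hB') (A - e) (B - d) (A + e) (B + d)
        M N p q t s)
  have hanti := antitoneOn_of_deriv_nonpos (convex_Icc 0 t)
    (fun s _ => (hD s).continuousAt.continuousWithinAt)
    (fun s _ => (hD s).differentiableAt.differentiableWithinAt) (by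
      intro s hs
      rw [interior_Icc] at hs
      rw [(hD s).deriv]
      have h := jacobiInt_comparison_nonpos hA hB he hd hA' hB'
        (eval_jacobiFlow_nonneg ha hb M p hp (t := t - s) (by linarith [hs.2]))
        (eval_jacobiFlow_nonneg (by linarith) (by linarith) N q hq (t := s) hs.1.le)
      rw [map_sub, map_smul, smul_eq_mul] at h
      have h' := mul_le_mul_of_nonneg_left h (exp_pos (-((e + d) * (A + B + 1)) * s)).le
      simp only [id]
      linarith)
  have h := hanti (Set.left_mem_Icc.2 ht) (Set.right_mem_Icc.2 ht) ht
  simpa using h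

end JacobiComparison

section JacobiKernel

open Polynomial

/-- Squared norm of `jacobiAux a b n`. -/
noncomputable def jacobiNormSq (a b : ℝ) (n : ℕ) : ℝ :=
  ∫ x in (-1)..1, jacobiW a b x * (jacobiAux a b n * jacobiAux a b n).eval x

lemma jacobiNormSq_eq {a b : ℝ} (ha : -1 < a) (hb : -1 < b) (n : ℕ) :
    jacobiNormSq a b n = jacobiInt ha hb (jacobiAux a b n * jacobiAux a b n) := rfl

/-- The terms of the Jacobi heat kernel, without the endpoint conventions of `jacobiP`. -/
noncomputable def jacobiTerm (a b t : ℝ) (n : ℕ) (x y : ℝ) : ℝ :=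
  exp (-t * n * (n + a + b + 1)) * (jacobiAux a b n).eval x * (jacobiAux a b n).eval y /
    jacobiNormSq a b n

/-- The Jacobi heat kernel, without the endpoint conventions of `jacobiP`. -/
noncomputable def jacobiKer (a b t x y : ℝ) : ℝ := ∑' n, jacobiTerm a b t n x y

variable {a b : ℝ} (ha : -1 < a) (hb : -1 < b) {t : ℝ} (ht : 0 < t)

lemma tendsto_exp_mul_sq (s κ r : ℝ) {t : ℝ} (ht : 0 < t) :
    Filter.Tendsto (fun n : ℕ => exp (-t * (n + s)) * (6 * (κ + n)) ^ 2 / r)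
      Filter.atTop (nhds 0) := by
  have h1 : Filter.Tendsto (fun n : ℕ => t * (κ + n)) Filter.atTop Filter.atTop :=
    (Filter.tendsto_atTop_add_const_left _ κ tendsto_natCast_atTop_atTop).const_mul_atTop ht
  have h2 := ((tendsto_pow_mul_exp_neg_atTop_nhds_zero 2).comp h1).const_mul
    (36 / (t ^ 2 * r) * exp (-t * (s - κ)))
  rw [mul_zero] at h2
  refine h2.congr fun n => ?_
  simp only [Function.comp]
  rw [show -t * (n + s) = -t * (s - κ) + -(t * (κ + n)) by ring, exp_add]
  by_cases hr : r = 0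
  · simp [hr]
  · field_simp
    ring

include ha hb ht in
lemma exists_summable_bound_jacobiTerm : ∃ u : ℕ → ℝ, Summable u ∧
    ∀ n, ∀ x ∈ Set.Icc (-1 : ℝ) 1, ∀ y ∈ Set.Icc (-1 : ℝ) 1, ‖jacobiTerm a b t n x y‖ ≤ u n := by
  obtain ⟨c, hc, r, hr, hH⟩ := exists_le_jacobiInt_jacobiAux_sq ha hb
  set g : ℕ → ℝ := fun n => exp (-t * (n + (a + b + 1))) * (6 * (|a| + |b| + n)) ^ 2 / r with hg
  have hg0 : ∀ n, 0 ≤ g n := fun n => by positivity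
  refine ⟨fun n => 1 / c * g n ^ n, Summable.mul_left _ ?_, fun n x hx y hy => ?_⟩
  · have hev := (tendsto_exp_mul_sq (a + b + 1) (|a| + |b|) r ht).eventually
      (gt_mem_nhds (by norm_num : (0 : ℝ) < 1 / 2))
    refine Summable.of_norm_bounded_eventually_nat
      (summable_geometric_of_lt_one (by norm_num) (by norm_num : (1 / 2 : ℝ) < 1)) ?_
    filter_upwards [hev] with n hn
    rw [norm_of_nonneg (pow_nonneg (hg0 n) n)]
    exact pow_le_pow_left₀ (hg0 n) hn.le n
  · have hpos : 0 < c * r ^ n := by positivity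
    have hx' := abs_eval_jacobiAux_le a b n hx
    have hy' := abs_eval_jacobiAux_le a b n hy
    have hHn : c * r ^ n ≤ jacobiNormSq a b n := hH n
    rw [jacobiTerm, norm_div, norm_mul, norm_mul, norm_of_nonneg (exp_pos _).le,
      norm_of_nonneg (hpos.le.trans hHn), norm_eq_abs, norm_eq_abs]
    calc _ ≤ exp (-t * n * (n + a + b + 1)) * (6 * (|a| + |b| + n)) ^ n *
          (6 * (|a| + |b| + n)) ^ n / (c * r ^ n) := by gcongr
      _ = 1 / c * g n ^ n := by
          rw [hg]
          simp only [div_pow, mul_pow _ (_ ^ 2) n, ← exp_nat_mul, ← pow_mul]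
          rw [show (n : ℝ) * (-t * (n + (a + b + 1))) = -t * n * (n + a + b + 1) by ring]
          generalize 6 * (|a| + |b| + (n : ℝ)) = B
          field_simp
          ring

lemma continuous_jacobiTerm (a b t : ℝ) (n : ℕ) :
    Continuous fun z : ℝ × ℝ => jacobiTerm a b t n z.1 z.2 := by
  unfold jacobiTerm
  fun_prop

include ha hb ht in
lemma continuousOn_jacobiKer : ContinuousOn (fun z : ℝ × ℝ => jacobiKer a b t z.1 z.2)
    (Set.Icc (-1) 1 ×ˢ Set.Icc (-1) 1) := by
  obtain ⟨u, hu, hle⟩ := exists_summable_bound_jacobiTerm ha hb ht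
  exact continuousOn_tsum (fun n => (continuous_jacobiTerm a b t n).continuousOn) hu
    fun n z hz => hle n z.1 hz.1 z.2 hz.2

lemma integrableOn_mul_prod {f g : ℝ → ℝ} (hf : IntegrableOn f (Set.Icc (-1) 1))
    (hg : IntegrableOn g (Set.Icc (-1) 1)) :
    IntegrableOn (fun z : ℝ × ℝ => f z.1 * g z.2) (Set.Icc (-1) 1 ×ˢ Set.Icc (-1) 1) := by
  rw [IntegrableOn, Measure.volume_eq_prod, ← Measure.prod_restrict]
  exact Integrable.mul_prod hf hg

include ha hb ht in
lemma integrableOn_jacobiKer_mul {f g : ℝ → ℝ} (hf : IntegrableOn f (Set.Icc (-1) 1))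
    (hg : IntegrableOn g (Set.Icc (-1) 1)) :
    IntegrableOn (fun z : ℝ × ℝ => jacobiKer a b t z.1 z.2 * (f z.1 * g z.2))
      (Set.Icc (-1) 1 ×ˢ Set.Icc (-1) 1) :=
  (integrableOn_mul_prod hf hg).continuousOn_mul (continuousOn_jacobiKer ha hb ht)
    (isCompact_Icc.prod isCompact_Icc)

include ha hb ht in
lemma hasSum_integral_jacobiKer_mul {f g : ℝ → ℝ} (hf : IntegrableOn f (Set.Icc (-1) 1))
    (hg : IntegrableOn g (Set.Icc (-1) 1)) :
    HasSum (fun n : ℕ => exp (-t * n * (n + a + b + 1)) / jacobiNormSq a b n *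
        ((∫ x in Set.Icc (-1 : ℝ) 1, (jacobiAux a b n).eval x * f x) *
          ∫ y in Set.Icc (-1 : ℝ) 1, (jacobiAux a b n).eval y * g y))
      (∫ z in Set.Icc (-1 : ℝ) 1 ×ˢ Set.Icc (-1 : ℝ) 1,
        jacobiKer a b t z.1 z.2 * (f z.1 * g z.2)) := by
  obtain ⟨u, hu, hle⟩ := exists_summable_bound_jacobiTerm ha hb ht
  have hmeas : MeasurableSet (Set.Icc (-1 : ℝ) 1 ×ˢ Set.Icc (-1 : ℝ) 1) :=
    measurableSet_Icc.prod measurableSet_Icc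
  have hfg := integrableOn_mul_prod hf hg
  have hint : ∀ n, IntegrableOn (fun z : ℝ × ℝ => jacobiTerm a b t n z.1 z.2 * (f z.1 * g z.2))
      (Set.Icc (-1) 1 ×ˢ Set.Icc (-1) 1) := fun n =>
    hfg.continuousOn_mul (continuous_jacobiTerm a b t n).continuousOn
      (isCompact_Icc.prod isCompact_Icc)
  have h := hasSum_integral_of_summable_integral_norm hint (by
    refine Summable.of_nonneg_of_le (fun n => integral_nonneg fun z => norm_nonneg _) (fun n => ?_)
      (hu.mul_right (∫ z in Set.Icc (-1 : ℝ) 1 ×ˢ Set.Icc (-1 : ℝ) 1, ‖f z.1 * g z.2‖))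
    rw [← integral_const_mul]
    refine setIntegral_mono_on (hint n).norm (hfg.norm.const_mul _) hmeas fun z hz => ?_
    rw [norm_mul]
    exact mul_le_mul_of_nonneg_right (hle n z.1 hz.1 z.2 hz.2) (norm_nonneg _))
  simp only [tsum_mul_right] at h
  refine Eq.mp (congrArg (fun F => HasSum F _) (funext fun n => ?_)) h
  rw [← setIntegral_prod_mul, ← Measure.volume_eq_prod, ← integral_const_mul]
  congr 1
  ext z
  rw [jacobiTerm]
  ring

lemma integrableOn_jacobiW (ha : -1 < a) (hb : -1 < b) (p : ℝ[X]) :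
    IntegrableOn (fun x => jacobiW a b x * p.eval x) (Set.Icc (-1) 1) :=
  (intervalIntegrable_iff_integrableOn_Icc_of_le (by norm_num)).1
    (intervalIntegrable_jacobiW_mul ha hb p)

lemma jacobiInt_eq_setIntegral (p : ℝ[X]) :
    jacobiInt ha hb p = ∫ x in Set.Icc (-1 : ℝ) 1, jacobiW a b x * p.eval x := by
  rw [jacobiInt_apply, intervalIntegral.integral_of_le (by norm_num), integral_Icc_eq_integral_Ioc]

lemma jacobiInt_jacobiAux_mul_sum {N : ℕ} {c : ℕ → ℝ} (hc : ∀ n, N ≤ n → c n = 0) (n : ℕ) :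
    jacobiInt ha hb (jacobiAux a b n * ∑ m ∈ Finset.range N, c m • jacobiAux a b m) =
      c n * jacobiNormSq a b n := by
  simp only [Finset.mul_sum, map_sum, mul_smul_comm, map_smul, smul_eq_mul]
  by_cases hn : n < N
  · rw [Finset.sum_eq_single_of_mem n (Finset.mem_range.2 hn), jacobiNormSq_eq ha hb]
    intro m _ hm
    rw [jacobiInt_jacobiAux_mul_of_ne ha hb hm, mul_zero]
  · rw [hc n (not_lt.1 hn), zero_mul]
    refine Finset.sum_eq_zero fun m hm => ?_
    rw [Finset.mem_range] at hm
    rw [jacobiInt_jacobiAux_mul_of_ne ha hb (by omega), mul_zero]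

include ha hb ht in
/-- Integrating the heat kernel against a polynomial in the first variable gives the flow. -/
lemma integral_jacobiKer_left {N : ℕ} {c : ℕ → ℝ} (hc : ∀ n, N ≤ n → c n = 0) {p : ℝ[X]}
    (hp : p = ∑ n ∈ Finset.range N, c n • jacobiAux a b n) {g : ℝ → ℝ}
    (hg : IntegrableOn g (Set.Icc (-1) 1)) :
    ∫ z in Set.Icc (-1 : ℝ) 1 ×ˢ Set.Icc (-1 : ℝ) 1,
        jacobiKer a b t z.1 z.2 * ((jacobiW a b z.1 * p.eval z.1) * g z.2) =
      ∫ y in Set.Icc (-1 : ℝ) 1, (jacobiFlow a b N c t).eval y * g y := by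
  have h := hasSum_integral_jacobiKer_mul ha hb ht (integrableOn_jacobiW ha hb p) hg
  have e : ∀ n, ∫ x in Set.Icc (-1 : ℝ) 1,
      (jacobiAux a b n).eval x * (jacobiW a b x * p.eval x) = c n * jacobiNormSq a b n := by
    intro n
    rw [← jacobiInt_jacobiAux_mul_sum ha hb hc, ← hp, jacobiInt_eq_setIntegral]
    congr 1
    ext x
    rw [eval_mul]
    ring
  simp only [e] at h
  refine h.unique ?_
  have hint : ∀ q : ℝ[X], IntegrableOn (fun y => q.eval y * g y) (Set.Icc (-1) 1) := fun q =>
    hg.continuousOn_mul q.continuous.continuousOn isCompact_Icc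
  have e2 : ∫ y in Set.Icc (-1 : ℝ) 1, (jacobiFlow a b N c t).eval y * g y =
      ∑ n ∈ Finset.range N, exp (-t * n * (n + a + b + 1)) / jacobiNormSq a b n *
        (c n * jacobiNormSq a b n *
          ∫ y in Set.Icc (-1 : ℝ) 1, (jacobiAux a b n).eval y * g y) := by
    simp only [jacobiFlow, eval_finsetSum, eval_smul, smul_eq_mul, Finset.sum_mul, mul_assoc]
    rw [integral_finsetSum _ fun n _ => ((hint (jacobiAux a b n)).const_mul _).const_mul _]
    refine Finset.sum_congr rfl fun n _ => ?_
    have hne : jacobiNormSq a b n ≠ 0 := (jacobiInt_jacobiAux_sq_pos ha hb n).ne'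
    rw [integral_const_mul, integral_const_mul]
    rw [show -t * (n * (n + a + b + 1)) = -(n * (n + a + b + 1)) * t by ring]
    field_simp
  rw [e2]
  refine hasSum_sum_of_ne_finset_zero fun n hn => ?_
  rw [hc n (by simpa using hn)]
  simp

include ha hb ht in
lemma integral_jacobiKer_right {N : ℕ} {c : ℕ → ℝ} (hc : ∀ n, N ≤ n → c n = 0) {p : ℝ[X]}
    (hp : p = ∑ n ∈ Finset.range N, c n • jacobiAux a b n) {f : ℝ → ℝ}
    (hf : IntegrableOn f (Set.Icc (-1) 1)) :
    ∫ z in Set.Icc (-1 : ℝ) 1 ×ˢ Set.Icc (-1 : ℝ) 1,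
        jacobiKer a b t z.1 z.2 * (f z.1 * (jacobiW a b z.2 * p.eval z.2)) =
      ∫ x in Set.Icc (-1 : ℝ) 1, (jacobiFlow a b N c t).eval x * f x := by
  rw [← integral_jacobiKer_left ha hb ht hc hp hf]
  refine (hasSum_integral_jacobiKer_mul ha hb ht hf (integrableOn_jacobiW ha hb p)).unique ?_
  simpa only [mul_comm (∫ x in Set.Icc (-1 : ℝ) 1, _ * (jacobiW a b x * _))] using
    hasSum_integral_jacobiKer_mul ha hb ht (integrableOn_jacobiW ha hb p) hf

end JacobiKernel

section JacobiKernelComparison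

open Polynomial

/-- The polynomial peaked at `x₀` used to localize integrals. -/
noncomputable def peakPoly (x₀ : ℝ) : ℝ[X] := 1 - C (1 / 4) * (X - C x₀) ^ 2

lemma eval_peakPoly (x₀ x : ℝ) : (peakPoly x₀).eval x = 1 - 1 / 4 * (x - x₀) ^ 2 := by
  simp [peakPoly]

lemma eval_peakPoly_pos {x₀ x : ℝ} (h₀ : x₀ ∈ Set.Ioo (-1 : ℝ) 1) (hx : x ∈ Set.Icc (-1 : ℝ) 1) :
    0 < (peakPoly x₀).eval x := by
  rw [eval_peakPoly]
  have h1 : 0 < 2 - (x - x₀) := by linarith [h₀.1, hx.2]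
  have h2 : 0 < 2 + (x - x₀) := by linarith [h₀.2, hx.1]
  nlinarith [mul_pos h1 h2]

lemma eval_peakPoly_le_one (x₀ x : ℝ) : (peakPoly x₀).eval x ≤ 1 := by
  rw [eval_peakPoly]
  nlinarith [sq_nonneg (x - x₀)]

lemma eval_peakPoly_lt_one {x₀ x : ℝ} (h : x ≠ x₀) : (peakPoly x₀).eval x < 1 := by
  rw [eval_peakPoly]
  nlinarith [sq_pos_of_ne_zero (sub_ne_zero.2 h)]

/-- A function whose integrals against products of powers of peaked polynomials are nonnegative
is nonnegative at the peak. -/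
lemma nonneg_of_integral_peakPoly_nonneg {g : ℝ × ℝ → ℝ} {x₀ y₀ : ℝ}
    (hx : x₀ ∈ Set.Ioo (-1 : ℝ) 1) (hy : y₀ ∈ Set.Ioo (-1 : ℝ) 1)
    (hg : IntegrableOn g (Set.Icc (-1) 1 ×ˢ Set.Icc (-1) 1))
    (hc : ContinuousWithinAt g (Set.Icc (-1) 1 ×ˢ Set.Icc (-1) 1) (x₀, y₀))
    (h : ∀ n : ℕ, 0 ≤ ∫ z in Set.Icc (-1 : ℝ) 1 ×ˢ Set.Icc (-1 : ℝ) 1,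
      ((peakPoly x₀).eval z.1 * (peakPoly y₀).eval z.2) ^ n * g z) :
    0 ≤ g (x₀, y₀) := by
  have hpos : ∀ z ∈ Set.Icc (-1 : ℝ) 1 ×ˢ Set.Icc (-1 : ℝ) 1,
      0 < (peakPoly x₀).eval z.1 * (peakPoly y₀).eval z.2 := fun z hz =>
    mul_pos (eval_peakPoly_pos hx hz.1) (eval_peakPoly_pos hy hz.2)
  have hmax : (peakPoly x₀).eval x₀ * (peakPoly y₀).eval y₀ = 1 := by simp [eval_peakPoly]
  refine ge_of_tendsto'
    (tendsto_setIntegral_pow_smul_of_unique_maximum_of_isCompact_of_integrableOn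
    (c := fun z : ℝ × ℝ => (peakPoly x₀).eval z.1 * (peakPoly y₀).eval z.2)
    (isCompact_Icc.prod isCompact_Icc) (by fun_prop) ?_ (fun z hz => (hpos z hz).le) ?_ ?_ hg hc)
    fun n => ?_
  · rintro ⟨x, y⟩ hz hne
    have h1 := eval_peakPoly_pos hx hz.1
    have h2 := eval_peakPoly_pos hy hz.2
    simp only at h1 h2 ⊢
    rw [hmax]
    by_cases hxx : x = x₀
    · have hyy : y ≠ y₀ := fun h => hne (by rw [hxx, h])
      nlinarith [eval_peakPoly_lt_one hyy, eval_peakPoly_le_one x₀ x]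
    · nlinarith [eval_peakPoly_lt_one hxx, eval_peakPoly_le_one y₀ y]
  · simp only [hmax]; norm_num
  · rw [interior_prod_eq, interior_Icc]
    exact subset_closure ⟨hx, hy⟩
  · refine smul_nonneg (inv_nonneg.2 ?_) (h n)
    exact setIntegral_nonneg (measurableSet_Icc.prod measurableSet_Icc)
      fun z hz => pow_nonneg (hpos z hz).le n

variable {A B e d : ℝ} (hA : 0 ≤ A) (hB : 0 ≤ B) (he : 0 ≤ e) (hd : 0 ≤ d)
  (ha : -1 < A - e) (hb : -1 < B - d) {t : ℝ} (ht : 0 < t)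

include hA hB he hd ha hb ht in
/-- The kernel comparison integrated against nonnegative polynomials. -/
lemma integral_jacobiKer_comparison {p q : ℝ[X]}
    (hp : ∀ x ∈ Set.Icc (-1 : ℝ) 1, 0 ≤ p.eval x) (hq : ∀ x ∈ Set.Icc (-1 : ℝ) 1, 0 ≤ q.eval x) :
    exp (-((e + d) * (A + B + 1)) * t) * ∫ z in Set.Icc (-1 : ℝ) 1 ×ˢ Set.Icc (-1 : ℝ) 1,
        jacobiKer (A + e) (B + d) t z.1 z.2 *
          ((jacobiW A B z.1 * p.eval z.1) * (jacobiW (A + e) (B + d) z.2 * q.eval z.2)) ≤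
      ∫ z in Set.Icc (-1 : ℝ) 1 ×ˢ Set.Icc (-1 : ℝ) 1,
        jacobiKer (A - e) (B - d) t z.1 z.2 *
          ((jacobiW (A - e) (B - d) z.1 * p.eval z.1) * (jacobiW A B z.2 * q.eval z.2)) := by
  have hA' : -1 < A := by linarith
  have hB' : -1 < B := by linarith
  have ha' : -1 < A + e := by linarith
  have hb' : -1 < B + d := by linarith
  obtain ⟨M, c, hc, hpc⟩ := exists_eq_sum_jacobiAux (a := A - e) (b := B - d) (by linarith) p
  obtain ⟨N, c', hc', hqc⟩ := exists_eq_sum_jacobiAux (a := A + e) (b := B + d) (by linarith) q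
  rw [integral_jacobiKer_left ha hb ht hc hpc (integrableOn_jacobiW hA' hB' q),
    integral_jacobiKer_right ha' hb' ht hc' hqc (integrableOn_jacobiW hA' hB' p)]
  have h := jacobiInt_jacobiFlow_comparison hA hB he hd ha hb hA' hB' (M := M) (N := N)
    (p := c) (q := c') (by rw [jacobiFlow_zero, ← hpc]; exact hp)
    (by rw [jacobiFlow_zero, ← hqc]; exact hq) ht.le
  rw [jacobiFlow_zero, jacobiFlow_zero, ← hpc, ← hqc, jacobiInt_eq_setIntegral,
    jacobiInt_eq_setIntegral] at h
  simp only [eval_mul] at h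
  refine Eq.trans_le ?_ (h.trans_eq ?_)
  · congr 2
    ext x
    ring
  · congr 1
    ext x
    ring

include hA hB he hd ha hb ht in
lemma jacobiKer_comparison_interior {x y : ℝ} (hx : x ∈ Set.Ioo (-1 : ℝ) 1)
    (hy : y ∈ Set.Ioo (-1 : ℝ) 1) :
    0 ≤ jacobiKer (A - e) (B - d) t x y - exp (-((e + d) * (A + B + 1)) * t) *
      (jacobiW e d x * jacobiW e d y * jacobiKer (A + e) (B + d) t x y) := by
  have hA' : -1 < A := by linarith
  have hB' : -1 < B := by linarith
  have ha' : -1 < A + e := by linarith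
  have hb' : -1 < B + d := by linarith
  set E := exp (-((e + d) * (A + B + 1)) * t) with hE
  have i1 : ∀ p q : ℝ[X], IntegrableOn (fun z : ℝ × ℝ => jacobiKer (A - e) (B - d) t z.1 z.2 *
      ((jacobiW (A - e) (B - d) z.1 * p.eval z.1) * (jacobiW A B z.2 * q.eval z.2)))
      (Set.Icc (-1) 1 ×ˢ Set.Icc (-1) 1) := fun p q =>
    integrableOn_jacobiKer_mul ha hb ht (integrableOn_jacobiW ha hb p)
      (integrableOn_jacobiW hA' hB' q)
  have i2 : ∀ p q : ℝ[X], IntegrableOn (fun z : ℝ × ℝ => E * (jacobiKer (A + e) (B + d) t z.1 z.2 *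
      ((jacobiW A B z.1 * p.eval z.1) * (jacobiW (A + e) (B + d) z.2 * q.eval z.2))))
      (Set.Icc (-1) 1 ×ˢ Set.Icc (-1) 1) := fun p q =>
    (integrableOn_jacobiKer_mul ha' hb' ht (integrableOn_jacobiW hA' hB' p)
      (integrableOn_jacobiW ha' hb' q)).const_mul E
  have hcW : ∀ a b : ℝ, ∀ u ∈ Set.Ioo (-1 : ℝ) 1, ContinuousAt (jacobiW a b) u := fun a b u hu =>
    (continuousOn_jacobiW a b).continuousAt (isOpen_Ioo.mem_nhds hu)
  have hc1 : ∀ a b : ℝ, ContinuousWithinAt (fun z : ℝ × ℝ => jacobiW a b z.1)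
      (Set.Icc (-1) 1 ×ˢ Set.Icc (-1) 1) (x, y) := fun a b =>
    (ContinuousAt.comp (x := (x, y)) (f := Prod.fst) (g := jacobiW a b) (hcW a b x hx)
      continuousAt_fst).continuousWithinAt
  have hc2 : ∀ a b : ℝ, ContinuousWithinAt (fun z : ℝ × ℝ => jacobiW a b z.2)
      (Set.Icc (-1) 1 ×ˢ Set.Icc (-1) 1) (x, y) := fun a b =>
    (ContinuousAt.comp (x := (x, y)) (f := Prod.snd) (g := jacobiW a b) (hcW a b y hy)
      continuousAt_snd).continuousWithinAt
  have hxy : (x, y) ∈ Set.Icc (-1 : ℝ) 1 ×ˢ Set.Icc (-1 : ℝ) 1 :=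
    ⟨Set.Ioo_subset_Icc_self hx, Set.Ioo_subset_Icc_self hy⟩
  have h := nonneg_of_integral_peakPoly_nonneg (g := fun z => jacobiKer (A - e) (B - d) t z.1 z.2 *
      (jacobiW (A - e) (B - d) z.1 * jacobiW A B z.2) -
      E * (jacobiKer (A + e) (B + d) t z.1 z.2 * (jacobiW A B z.1 * jacobiW (A + e) (B + d) z.2)))
    hx hy (by
      have h := (i1 1 1).sub (i2 1 1)
      simp only [eval_one, mul_one] at h
      exact h)
    (((continuousOn_jacobiKer ha hb ht (x, y) hxy).mul ((hc1 _ _).mul (hc2 _ _))).sub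
      (continuousWithinAt_const.mul ((continuousOn_jacobiKer ha' hb' ht (x, y) hxy).mul
        ((hc1 _ _).mul (hc2 _ _)))))
    (by
      intro n
      have hcmp := integral_jacobiKer_comparison hA hB he hd ha hb ht
        (p := peakPoly x ^ n) (q := peakPoly y ^ n)
        (fun u hu => by rw [eval_pow]; exact pow_nonneg (eval_peakPoly_pos hx hu).le n)
        (fun u hu => by rw [eval_pow]; exact pow_nonneg (eval_peakPoly_pos hy hu).le n)
      rw [← integral_const_mul, ← sub_nonneg, ← integral_sub (i1 _ _) (i2 _ _)] at hcmp
      refine hcmp.trans_eq ?_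
      congr 1
      ext z
      rw [eval_pow, eval_pow]
      ring)
  simp only at h
  rw [show jacobiW A B x = jacobiW (A - e) (B - d) x * jacobiW e d x by
      rw [jacobiW_mul _ _ _ _ hx, sub_add_cancel, sub_add_cancel],
    ← jacobiW_mul A B e d hy] at h
  refine nonneg_of_mul_nonneg_left (b := jacobiW (A - e) (B - d) x * jacobiW A B y) ?_
    (mul_pos (jacobiW_pos _ _ hx) (jacobiW_pos _ _ hy))
  refine h.trans_eq ?_
  ring

include hA hB he hd ha hb ht in
lemma jacobiKer_comparison {x y : ℝ} (hx : x ∈ Set.Icc (-1 : ℝ) 1)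
    (hy : y ∈ Set.Icc (-1 : ℝ) 1) :
    0 ≤ jacobiKer (A - e) (B - d) t x y - exp (-((e + d) * (A + B + 1)) * t) *
      (jacobiW e d x * jacobiW e d y * jacobiKer (A + e) (B + d) t x y) := by
  have hcl : closure (Set.Ioo (-1 : ℝ) 1 ×ˢ Set.Ioo (-1 : ℝ) 1) =
      Set.Icc (-1 : ℝ) 1 ×ˢ Set.Icc (-1 : ℝ) 1 := by
    rw [closure_prod_eq, closure_Ioo (by norm_num)]
  have hxy : (x, y) ∈ Set.Icc (-1 : ℝ) 1 ×ˢ Set.Icc (-1 : ℝ) 1 := ⟨hx, hy⟩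
  have hcW := continuous_jacobiW he hd
  have hcont : ContinuousOn (fun z : ℝ × ℝ => jacobiKer (A - e) (B - d) t z.1 z.2 -
      exp (-((e + d) * (A + B + 1)) * t) *
        (jacobiW e d z.1 * jacobiW e d z.2 * jacobiKer (A + e) (B + d) t z.1 z.2))
      (Set.Icc (-1) 1 ×ˢ Set.Icc (-1) 1) :=
    (continuousOn_jacobiKer ha hb ht).sub (continuousOn_const.mul
      (((hcW.comp continuous_fst).mul (hcW.comp continuous_snd)).continuousOn.mul
        (continuousOn_jacobiKer (by linarith) (by linarith) ht)))
  have hmem : (x, y) ∈ closure (Set.Ioo (-1 : ℝ) 1 ×ˢ Set.Ioo (-1 : ℝ) 1) := hcl ▸ hxy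
  have := mem_closure_iff_nhdsWithin_neBot.1 hmem
  refine ge_of_tendsto ((hcont (x, y) hxy).mono (hcl ▸ subset_closure)) ?_
  filter_upwards [self_mem_nhdsWithin] with z hz
  exact jacobiKer_comparison_interior hA hB he hd ha hb ht hz.1 hz.2

end JacobiKernelComparison

section JacobiHeatKernel

open Polynomial Topology

lemma iteratedDeriv_jacobiW (n : ℕ) : ∀ (a b : ℝ) {x : ℝ}, x ∈ Set.Ioo (-1 : ℝ) 1 →
    iteratedDeriv n (fun y : ℝ => (1 - y) ^ (a + (n : ℝ)) * (1 + y) ^ (b + (n : ℝ))) x =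
      jacobiW a b x * (jacobiAux a b n).eval x := by
  induction n with
  | zero => intro a b x _; simp [jacobiAux, jacobiW]
  | succ n ih =>
    intro a b x hx
    have hev : iteratedDeriv n (fun y : ℝ => (1 - y) ^ (a + ((n + 1 : ℕ) : ℝ)) *
        (1 + y) ^ (b + ((n + 1 : ℕ) : ℝ))) =ᶠ[𝓝 x]
          fun y => jacobiW (a + 1) (b + 1) y * (jacobiAux (a + 1) (b + 1) n).eval y := by
      filter_upwards [isOpen_Ioo.mem_nhds hx] with y hy
      rw [← ih (a + 1) (b + 1) hy]
      push_cast
      simp only [add_assoc, add_comm (1 : ℝ)]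
    rw [iteratedDeriv_succ, hev.deriv_eq, (hasDerivAt_jacobiW_mul _ _ _ hx).deriv]
    simp only [add_sub_cancel_right, jacobiAux]

/-- The points at which `jacobiP a b n` takes the value of the Jacobi polynomial: all of `[-1, 1]`
except for the endpoints where the weight is not regular. -/
def IsJacobiRegular (a b x : ℝ) : Prop :=
  x ∈ Set.Icc (-1 : ℝ) 1 ∧ (x = 1 → a = 0) ∧ (x = -1 → b = 0)

lemma isJacobiRegular_of_mem_Ioo (a b : ℝ) {x : ℝ} (hx : x ∈ Set.Ioo (-1 : ℝ) 1) :
    IsJacobiRegular a b x :=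
  ⟨Set.Ioo_subset_Icc_self hx, fun h => absurd h hx.2.ne, fun h => absurd h hx.1.ne'⟩

lemma IsJacobiRegular.contDiffAt {a b x : ℝ} (h : IsJacobiRegular a b x) (n : ℕ) :
    ContDiffAt ℝ n (fun y : ℝ => (1 - y) ^ (a + (n : ℝ)) * (1 + y) ^ (b + (n : ℝ))) x := by
  obtain ⟨-, h1, h2⟩ := h
  refine ContDiffAt.mul ?_ ?_
  · refine (contDiffAt_rpow_const ?_).comp x (contDiffAt_const.sub contDiffAt_id)
    by_cases hx : x = 1
    · simp [h1 hx]
    · exact Or.inl (sub_ne_zero.2 (Ne.symm hx))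
  · refine (contDiffAt_rpow_const ?_).comp x (contDiffAt_const.add contDiffAt_id)
    by_cases hx : x = -1
    · simp [h2 hx]
    · exact Or.inl fun h => hx (by linarith)

lemma IsJacobiRegular.continuousAt_jacobiW {a b x : ℝ} (h : IsJacobiRegular a b x) :
    ContinuousAt (jacobiW a b) x := by
  have := (h.contDiffAt 0).continuousAt
  simp only [Nat.cast_zero, add_zero] at this
  exact this

lemma IsJacobiRegular.iteratedDeriv_eq {a b x : ℝ} (h : IsJacobiRegular a b x) (n : ℕ) :
    iteratedDeriv n (fun y : ℝ => (1 - y) ^ (a + (n : ℝ)) * (1 + y) ^ (b + (n : ℝ))) x =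
      jacobiW a b x * (jacobiAux a b n).eval x := by
  have hc := ((h.contDiffAt n).iteratedFDeriv_right (m := 0) (i := n) (by simp)).continuousAt
  have hc' : ContinuousAt (iteratedDeriv n
      (fun y : ℝ => (1 - y) ^ (a + (n : ℝ)) * (1 + y) ^ (b + (n : ℝ)))) x := by
    simp only [iteratedDeriv_eq_equiv_comp]
    exact (LinearIsometryEquiv.continuous _).continuousAt.comp hc
  have hmem : x ∈ closure (Set.Ioo (-1 : ℝ) 1) := by
    rw [closure_Ioo (by norm_num)]; exact h.1
  have := mem_closure_iff_nhdsWithin_neBot.1 hmem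
  refine tendsto_nhds_unique (l := 𝓝[Set.Ioo (-1) 1] x) (hc'.tendsto.mono_left nhdsWithin_le_nhds)
    (Filter.Tendsto.congr' ?_ ((h.continuousAt_jacobiW.mul
      (jacobiAux a b n).continuous.continuousAt).tendsto.mono_left nhdsWithin_le_nhds))
  filter_upwards [self_mem_nhdsWithin] with y hy
  exact (iteratedDeriv_jacobiW n a b hy).symm

lemma IsJacobiRegular.jacobiP_eq {a b x : ℝ} (h : IsJacobiRegular a b x) (n : ℕ) :
    jacobiP a b n x =
      (-1 : ℝ) ^ n / ((2 : ℝ) ^ n * (n.factorial : ℝ)) * (jacobiAux a b n).eval x := by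
  have e1 : (1 - x) ^ (-a) * (1 - x) ^ a = 1 := by
    by_cases hx : x = 1
    · simp [h.2.1 hx]
    · have : 0 < 1 - x := sub_pos.2 (lt_of_le_of_ne h.1.2 hx)
      rw [← rpow_add this, neg_add_cancel, rpow_zero]
  have e2 : (1 + x) ^ (-b) * (1 + x) ^ b = 1 := by
    by_cases hx : x = -1
    · simp [h.2.2 hx]
    · have : 0 < 1 + x := by linarith [lt_of_le_of_ne h.1.1 (Ne.symm hx)]
      rw [← rpow_add this, neg_add_cancel, rpow_zero]
  rw [jacobiP, h.iteratedDeriv_eq, jacobiW]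
  set κ := (-1 : ℝ) ^ n / ((2 : ℝ) ^ n * (n.factorial : ℝ))
  calc _ = κ * ((1 - x) ^ (-a) * (1 - x) ^ a) * ((1 + x) ^ (-b) * (1 + x) ^ b) *
        (jacobiAux a b n).eval x := by ring
    _ = _ := by rw [e1, e2, mul_one, mul_one]

lemma jacobiP_eq_zero {a b x : ℝ} (hx : x ∈ Set.Icc (-1 : ℝ) 1) (h : ¬ IsJacobiRegular a b x)
    (n : ℕ) : jacobiP a b n x = 0 := by
  rw [IsJacobiRegular, and_iff_right hx, not_and_or, Classical.not_imp, Classical.not_imp] at h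
  rcases h with ⟨rfl, h⟩ | ⟨rfl, h⟩
  · rw [jacobiP, sub_self, zero_rpow (neg_ne_zero.2 h)]; simp
  · rw [jacobiP, add_neg_cancel, zero_rpow (neg_ne_zero.2 h)]; simp

lemma hJacobi_eq (a b : ℝ) (n : ℕ) :
    hJacobi a b n =
      ((-1 : ℝ) ^ n / ((2 : ℝ) ^ n * (n.factorial : ℝ))) ^ 2 * jacobiNormSq a b n := by
  rw [hJacobi, jacobiNormSq, integral_Icc_eq_integral_Ioc, ← intervalIntegral.integral_of_le
    (by norm_num), ← intervalIntegral.integral_const_mul]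
  refine intervalIntegral_congr_Ioo fun x hx => ?_
  rw [(isJacobiRegular_of_mem_Ioo a b hx).jacobiP_eq, jacobiW, eval_mul]
  ring

lemma jacobiHeat_eq_jacobiKer {a b x y : ℝ} (hx : IsJacobiRegular a b x)
    (hy : IsJacobiRegular a b y) (t : ℝ) : jacobiHeat a b t x y = jacobiKer a b t x y := by
  refine tsum_congr fun n => ?_
  have hκ : (-1 : ℝ) ^ n / ((2 : ℝ) ^ n * (n.factorial : ℝ)) ≠ 0 := by positivity
  rw [hx.jacobiP_eq, hy.jacobiP_eq, hJacobi_eq, jacobiTerm]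
  rw [← mul_div_mul_left _ (jacobiNormSq a b n) (pow_ne_zero 2 hκ)]
  ring

lemma jacobiHeat_eq_zero {a b x y : ℝ} (hx : x ∈ Set.Icc (-1 : ℝ) 1) (hy : y ∈ Set.Icc (-1 : ℝ) 1)
    (h : ¬ (IsJacobiRegular a b x ∧ IsJacobiRegular a b y)) (t : ℝ) :
    jacobiHeat a b t x y = 0 := by
  rw [jacobiHeat, ← tsum_zero (α := ℝ) (β := ℕ)]
  refine tsum_congr fun n => ?_
  rcases not_and_or.1 h with h | h
  · simp [jacobiP_eq_zero hx h]
  · simp [jacobiP_eq_zero hy h]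

/-- Where the comparison weight does not vanish, regularity does not depend on the shift. -/
lemma isJacobiRegular_add_iff {a b ε δ x : ℝ} (hx : x ∈ Set.Icc (-1 : ℝ) 1)
    (h : jacobiW (ε / 2) (δ / 2) x ≠ 0) :
    IsJacobiRegular (a + ε) (b + δ) x ↔ IsJacobiRegular a b x := by
  have h1 : x = 1 → ε = 0 := by
    rintro rfl
    by_contra hε
    exact h (by simp [jacobiW, zero_rpow (div_ne_zero hε two_ne_zero)])
  have h2 : x = -1 → δ = 0 := by
    rintro rfl
    by_contra hδ
    exact h (by simp [jacobiW, zero_rpow (div_ne_zero hδ two_ne_zero)])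
  rw [IsJacobiRegular, IsJacobiRegular]
  refine and_congr_right fun _ => and_congr ?_ ?_
  · exact imp_congr_right fun hx1 => by rw [h1 hx1, add_zero]
  · exact imp_congr_right fun hx2 => by rw [h2 hx2, add_zero]

end JacobiHeatKernel

/-- Theorem 3.5 (comparison principle): for α, β > -1, ε, δ ≥ 0 with α ≥ -ε/2, β ≥ -δ/2,
and Φ_{ε,δ}(x) = (1-x)^{ε/2}(1+x)^{δ/2},
Φ_{ε,δ}(x)Φ_{ε,δ}(y) G_t^{(α+ε,β+δ)}(x,y) ≤ exp(((ε+δ)/2)(α+β+1+(ε+δ)/2)t) G_t^{(α,β)}(x,y). -/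
theorem stmt13 (a b ε δ : ℝ) (ha : -1 < a) (hb : -1 < b) (hε : 0 ≤ ε) (hδ : 0 ≤ δ)
    (haε : -ε/2 ≤ a) (hbδ : -δ/2 ≤ b) :
    ∀ x ∈ Set.Icc (-1 : ℝ) 1, ∀ y ∈ Set.Icc (-1 : ℝ) 1, ∀ t : ℝ, 0 < t →
      ((1 - x) ^ (ε/2) * (1 + x) ^ (δ/2)) * ((1 - y) ^ (ε/2) * (1 + y) ^ (δ/2)) *
          jacobiHeat (a + ε) (b + δ) t x y ≤
        Real.exp ((ε + δ)/2 * (a + b + 1 + (ε + δ)/2) * t) * jacobiHeat a b t x y := by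
  intro x hx y hy t ht
  change jacobiW (ε / 2) (δ / 2) x * jacobiW (ε / 2) (δ / 2) y * _ ≤ _
  have key := jacobiKer_comparison (A := a + ε / 2) (B := b + δ / 2) (e := ε / 2) (d := δ / 2)
    (by linarith) (by linarith) (by linarith) (by linarith) (by linarith) (by linarith) ht hx hy
  simp only [add_sub_cancel_right, add_assoc a, add_assoc b, add_halves] at key
  have hle : jacobiW (ε / 2) (δ / 2) x * jacobiW (ε / 2) (δ / 2) y *
      jacobiKer (a + ε) (b + δ) t x y ≤
        exp ((ε + δ) / 2 * (a + b + 1 + (ε + δ) / 2) * t) * jacobiKer a b t x y := by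
    rw [show -((ε / 2 + δ / 2) * (a + (ε / 2 + (b + δ / 2) + 1))) * t =
      -((ε + δ) / 2 * (a + b + 1 + (ε + δ) / 2) * t) by ring, exp_neg, sub_nonneg,
      inv_mul_le_iff₀ (exp_pos _)] at key
    exact key
  by_cases hΦ : jacobiW (ε / 2) (δ / 2) x * jacobiW (ε / 2) (δ / 2) y = 0
  · rw [hΦ, zero_mul] at hle ⊢
    by_cases h : IsJacobiRegular a b x ∧ IsJacobiRegular a b y
    · rwa [jacobiHeat_eq_jacobiKer h.1 h.2]
    · rw [jacobiHeat_eq_zero hx hy h, mul_zero]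
  · obtain ⟨hΦx, hΦy⟩ := mul_ne_zero_iff.1 hΦ
    by_cases h : IsJacobiRegular a b x ∧ IsJacobiRegular a b y
    · rwa [jacobiHeat_eq_jacobiKer h.1 h.2, jacobiHeat_eq_jacobiKer
        ((isJacobiRegular_add_iff hx hΦx).2 h.1) ((isJacobiRegular_add_iff hy hΦy).2 h.2)]
    · rw [jacobiHeat_eq_zero hx hy h, jacobiHeat_eq_zero hx hy
        (by rwa [isJacobiRegular_add_iff hx hΦx, isJacobiRegular_add_iff hy hΦy]),
        mul_zero, mul_zero]
end

section
/- Let α, β > -1 and ε, δ ≥ 0 with α ≥ -ε/2, β ≥ -δ/2. Then for all θ, φ ∈ [0,π] and t > 0 the Jacobi heat kernels in the trigonometric 'function' setting satisfy 𝔾_t^{(α+ε,β+δ)}(θ,φ) ≤ 𝔾_t^{(α,β)}(θ,φ). In particular, for α, β ≥ 0 the kernel 𝔾_t^{(α,β)}(θ,φ) is nonincreasing in each of the parameters α and β. -/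
open Real MeasureTheory

/-- Normalized Jacobi trigonometric polynomial 𝒫_n^{(a,b)}. -/
noncomputable def trigP (a b : ℝ) (n : ℕ) (θ : ℝ) : ℝ :=
  (2 : ℝ) ^ ((a + b + 1)/2) * (hJacobi a b n) ^ (-(1/2 : ℝ)) * jacobiP a b n (Real.cos θ)

/-- Jacobi trigonometric function φ_n^{(a,b)}. -/
noncomputable def phiFn (a b : ℝ) (n : ℕ) (θ : ℝ) : ℝ :=
  (Real.sin (θ/2)) ^ (a + 1/2) * (Real.cos (θ/2)) ^ (b + 1/2) * trigP a b n θ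

/-- Heat kernel 𝔾_t^{(a,b)} in the Jacobi trigonometric 'function' setting. -/
noncomputable def funHeat (a b : ℝ) (t θ φ : ℝ) : ℝ :=
  ∑' n : ℕ, Real.exp (-t * ((n : ℝ) + (a + b + 1)/2) ^ 2) * phiFn a b n θ * phiFn a b n φ

namespace JacobiHeat

open Polynomial

/-- The Jacobi operator `-(1 - x²) ∂² - (b - a - (a + b + 2) x) ∂` on polynomials. -/
noncomputable def jacobiOp (a b : ℝ) : ℝ[X] →ₗ[ℝ] ℝ[X] :=
  -(LinearMap.mulLeft ℝ (1 - X ^ 2) ∘ₗ derivative ∘ₗ derivative) -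
    LinearMap.mulLeft ℝ (C (b - a) - C (a + b + 2) * X) ∘ₗ derivative

lemma jacobiOp_apply (a b : ℝ) (p : ℝ[X]) :
    jacobiOp a b p = -((1 - X ^ 2) * derivative (derivative p)) -
      (C (b - a) - C (a + b + 2) * X) * derivative p := rfl

/-- The raising operator `(1 - x²) ∂ + (b - a - (a + b) x)` on polynomials. -/
noncomputable def raiseOp (a b : ℝ) (p : ℝ[X]) : ℝ[X] :=
  (1 - X ^ 2) * derivative p + (C (b - a) - C (a + b) * X) * p

lemma jacobiOp_raiseOp (a b : ℝ) (p : ℝ[X]) :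
    jacobiOp (a - 1) (b - 1) (raiseOp a b p) = raiseOp a b (jacobiOp a b p + C (a + b) * p) := by
  simp only [jacobiOp_apply, raiseOp, derivative_add, derivative_mul, derivative_sub,
    derivative_one, derivative_X_pow, derivative_C, derivative_X, derivative_neg, C_add, C_sub,
    map_ofNat, Nat.cast_ofNat, Nat.add_one_sub_one,
    Nat.cast_one, C_1, derivative_zero, derivative_ofNat]
  ring

/-- The polynomial factor of the `k`-th derivative of `(1 - x)^a (1 + x)^b`. -/
noncomputable def rodriguesPoly (a b : ℝ) : ℕ → ℝ[X]
  | 0 => 1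
  | k + 1 => raiseOp (a - k) (b - k) (rodriguesPoly a b k)

lemma raiseOp_smul (a b c : ℝ) (p : ℝ[X]) : raiseOp a b (c • p) = c • raiseOp a b p := by
  simp only [raiseOp, derivative_smul, smul_add, mul_smul_comm]

lemma jacobiOp_rodriguesPoly (a b : ℝ) (k : ℕ) :
    jacobiOp (a - k) (b - k) (rodriguesPoly a b k) =
      (k * (a + b) - k * (k - 1) : ℝ) • rodriguesPoly a b k := by
  induction k with
  | zero => simp [jacobiOp_apply, rodriguesPoly]
  | succ k ih =>
    have h1 : a - ((k + 1 : ℕ) : ℝ) = a - k - 1 := by push_cast; ring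
    have h2 : b - ((k + 1 : ℕ) : ℝ) = b - k - 1 := by push_cast; ring
    rw [h1, h2, rodriguesPoly, jacobiOp_raiseOp, ih, ← smul_eq_C_mul, ← add_smul, raiseOp_smul]
    congr 1
    push_cast
    ring

lemma eval_one_rodriguesPoly_ne_zero {a b : ℝ} (n : ℕ) (ha : (n : ℝ) - 1 < a) (k : ℕ)
    (hk : k ≤ n) : (rodriguesPoly a b k).eval 1 ≠ 0 := by
  induction k with
  | zero => simp [rodriguesPoly]
  | succ k ih =>
    have hk' : (k : ℝ) + 1 ≤ n := by exact_mod_cast hk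
    simp only [rodriguesPoly, raiseOp, eval_add, eval_mul, eval_sub, eval_one, eval_pow, eval_X,
      eval_C, one_pow, sub_self, zero_mul, zero_add, mul_one]
    refine mul_ne_zero ?_ (ih (by omega))
    have : 0 < a - k := by linarith
    intro h
    linarith

/-- The weight `(1 - x)^a (1 + x)^b`. -/
noncomputable def wt (a b x : ℝ) : ℝ := (1 - x) ^ a * (1 + x) ^ b

lemma hasDerivAt_wt (a b : ℝ) {x : ℝ} (hx : x ∈ Set.Ioo (-1 : ℝ) 1) :
    HasDerivAt (wt a b) (wt (a - 1) (b - 1) x * (b - a - (a + b) * x)) x := by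
  have h1 : 0 < 1 - x := by linarith [hx.2]
  have h2 : 0 < 1 + x := by linarith [hx.1]
  have d1 := ((hasDerivAt_id x).const_sub 1).rpow_const (p := a) (Or.inl h1.ne')
  have d2 := ((hasDerivAt_id x).const_add 1).rpow_const (p := b) (Or.inl h2.ne')
  refine (d1.mul d2).congr_deriv ?_
  simp only [id, wt]
  have e1 : (1 - x) ^ a = (1 - x) ^ (a - 1) * (1 - x) := by
    rw [← Real.rpow_add_one h1.ne']; ring_nf
  have e2 : (1 + x) ^ b = (1 + x) ^ (b - 1) * (1 + x) := by
    rw [← Real.rpow_add_one h2.ne']; ring_nf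
  rw [e1, e2]
  ring

lemma wt_add_one (a b : ℝ) {x : ℝ} (hx : x ∈ Set.Ioo (-1 : ℝ) 1) :
    wt (a + 1) (b + 1) x = wt a b x * (1 - x ^ 2) := by
  have h1 : 0 < 1 - x := by linarith [hx.2]
  have h2 : 0 < 1 + x := by linarith [hx.1]
  rw [wt, wt, Real.rpow_add_one h1.ne', Real.rpow_add_one h2.ne']
  ring

lemma iteratedDeriv_wt (a b : ℝ) (k : ℕ) {x : ℝ} (hx : x ∈ Set.Ioo (-1 : ℝ) 1) :
    iteratedDeriv k (wt a b) x = wt (a - k) (b - k) x * (rodriguesPoly a b k).eval x := by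
  induction k generalizing x with
  | zero => simp [rodriguesPoly]
  | succ k ih =>
    rw [iteratedDeriv_succ]
    have he : iteratedDeriv k (wt a b) =ᶠ[nhds x]
        fun y => wt (a - k) (b - k) y * (rodriguesPoly a b k).eval y := by
      filter_upwards [isOpen_Ioo.mem_nhds hx] with y hy using ih hy
    rw [he.deriv_eq, ((hasDerivAt_wt _ _ hx).fun_mul ((rodriguesPoly a b k).hasDerivAt x)).deriv]
    have hw := wt_add_one (a - k - 1) (b - k - 1) hx
    simp only [sub_add_cancel] at hw
    have h1 : a - ((k + 1 : ℕ) : ℝ) = a - k - 1 := by push_cast; ring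
    have h2 : b - ((k + 1 : ℕ) : ℝ) = b - k - 1 := by push_cast; ring
    rw [h1, h2, hw]
    simp only [rodriguesPoly, raiseOp, eval_add, eval_mul, eval_sub, eval_one, eval_pow, eval_X,
      eval_C]
    ring

/-- The Jacobi polynomial as an element of `ℝ[X]`. -/
noncomputable def jacobiPoly (a b : ℝ) (n : ℕ) : ℝ[X] :=
  ((-1 : ℝ) ^ n / ((2 : ℝ) ^ n * (n.factorial : ℝ))) • rodriguesPoly (a + n) (b + n) n

lemma jacobiP_eq_eval (a b : ℝ) (n : ℕ) {x : ℝ} (hx : x ∈ Set.Ioo (-1 : ℝ) 1) :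
    jacobiP a b n x = (jacobiPoly a b n).eval x := by
  have h1 : 0 < 1 - x := by linarith [hx.2]
  have h2 : 0 < 1 + x := by linarith [hx.1]
  have h := iteratedDeriv_wt (a + n) (b + n) n hx
  unfold jacobiP
  change _ * iteratedDeriv n (wt (a + n) (b + n)) x = _
  rw [h, jacobiPoly, eval_smul, smul_eq_mul, add_sub_cancel_right, add_sub_cancel_right, wt,
    Real.rpow_neg h1.le, Real.rpow_neg h2.le]
  have := (Real.rpow_pos_of_pos h1 a).ne'
  have := (Real.rpow_pos_of_pos h2 b).ne'
  field_simp

/-- The eigenvalue of `jacobiPoly a b n`. -/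
noncomputable def eigval (a b : ℝ) (n : ℕ) : ℝ := n * (n + a + b + 1)

lemma jacobiOp_jacobiPoly (a b : ℝ) (n : ℕ) :
    jacobiOp a b (jacobiPoly a b n) = eigval a b n • jacobiPoly a b n := by
  have h := jacobiOp_rodriguesPoly (a + n) (b + n) n
  rw [add_sub_cancel_right, add_sub_cancel_right] at h
  rw [jacobiPoly, map_smul, h, smul_comm]
  congr 2
  rw [eigval]; ring

lemma jacobiPoly_ne_zero {a : ℝ} (b : ℝ) (ha : -1 < a) (n : ℕ) : jacobiPoly a b n ≠ 0 := by
  have h := eval_one_rodriguesPoly_ne_zero (a := a + n) (b := b + n) n (by linarith) n le_rfl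
  refine smul_ne_zero (by positivity) ?_
  rintro h0
  simp [h0] at h

lemma eigval_injective {a b : ℝ} (ha : -1 < a) (hb : -1 < b) :
    Function.Injective (eigval a b) := by
  intro m n h
  by_contra hmn
  have h1 : ((m : ℝ) - n) * (m + n + a + b + 1) = 0 := by
    simp only [eigval] at h; linarith
  have h2 : (1 : ℝ) ≤ m + n := by
    have : 1 ≤ m + n := by omega
    exact_mod_cast this
  rcases mul_eq_zero.mp h1 with h3 | h3
  · exact hmn (by exact_mod_cast sub_eq_zero.mp h3)
  · linarith

lemma eigval_nonneg {a b : ℝ} (ha : -1 < a) (hb : -1 < b) (n : ℕ) : 0 ≤ eigval a b n := by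
  rcases Nat.eq_zero_or_pos n with rfl | h
  · simp [eigval]
  · have : (1 : ℝ) ≤ n := by exact_mod_cast h
    exact mul_nonneg (by linarith) (by linarith)

lemma coeff_jacobiOp (a b : ℝ) (p : ℝ[X]) {m : ℕ} (hp : p.natDegree ≤ m) :
    (jacobiOp a b p).coeff m = eigval a b m * p.coeff m := by
  have h1 : p.coeff (m + 1) = 0 := coeff_eq_zero_of_natDegree_lt (by omega)
  have h2 : p.coeff (m + 2) = 0 := coeff_eq_zero_of_natDegree_lt (by omega)
  rw [jacobiOp_apply]
  rcases m with _ | _ | m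
  · simp only [zero_add] at h1
    simp [sub_mul, mul_assoc, coeff_derivative, h1, h2, eigval]
  · have : (C (a + b + 2) * X * derivative p).coeff 1 = (a + b + 2) * p.coeff 1 := by
      rw [mul_assoc, coeff_C_mul, coeff_X_mul, coeff_derivative]; simp
    simp only [zero_add] at *
    simp only [sub_mul, this, coeff_sub, coeff_neg, one_mul, coeff_derivative, coeff_X_pow_mul',
      coeff_C_mul, h1, h2, eigval]
    norm_num
    left; ring
  · have : (C (a + b + 2) * X * derivative p).coeff (m + 2) =
        (a + b + 2) * (p.coeff (m + 2) * (m + 2)) := by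
      rw [mul_assoc, coeff_C_mul, coeff_X_mul, coeff_derivative]; push_cast; ring
    simp only [sub_mul, this, coeff_sub, coeff_neg, one_mul, coeff_derivative,
      coeff_X_pow_mul, coeff_C_mul, h1, h2, eigval]
    push_cast
    ring

lemma natDegree_jacobiPoly {a b : ℝ} (ha : -1 < a) (hb : -1 < b) (n : ℕ) :
    (jacobiPoly a b n).natDegree = n := by
  have h := coeff_jacobiOp a b (jacobiPoly a b n) le_rfl
  rw [jacobiOp_jacobiPoly, coeff_smul, smul_eq_mul] at h
  have h0 : (jacobiPoly a b n).coeff (jacobiPoly a b n).natDegree ≠ 0 :=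
    leadingCoeff_ne_zero.mpr (jacobiPoly_ne_zero b ha n)
  exact (eigval_injective ha hb (mul_right_cancel₀ h0 h)).symm

/-- Every real polynomial is a finite linear combination of Jacobi polynomials. -/
lemma exists_sum_jacobiPoly {a b : ℝ} (ha : -1 < a) (hb : -1 < b) (p : ℝ[X]) :
    ∃ (s : Finset ℕ) (c : ℕ → ℝ), p = ∑ n ∈ s, c n • jacobiPoly a b n := by
  let S : Polynomial.Sequence ℝ :=
    ⟨jacobiPoly a b, fun n => by
      rw [degree_eq_natDegree (jacobiPoly_ne_zero b ha n), natDegree_jacobiPoly ha hb]⟩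
  have hS : Submodule.span ℝ (Set.range S) = ⊤ :=
    S.span fun i => (leadingCoeff_ne_zero.mpr (S.ne_zero i)).isUnit
  have hp : p ∈ Submodule.span ℝ (Set.range S) := hS ▸ Submodule.mem_top
  obtain ⟨c, rfl⟩ := (Finsupp.mem_span_range_iff_exists_finsupp).mp hp
  exact ⟨c.support, c, rfl⟩

lemma _root_.IsLocalMin.hasDerivAt_nonneg {f f' : ℝ → ℝ} {f'' x : ℝ} (h : IsLocalMin f x)
    (hf : ∀ᶠ y in nhds x, HasDerivAt f (f' y) y) (hf' : HasDerivAt f' f'' x) : 0 ≤ f'' := by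
  by_contra! hlt
  have he : deriv f =ᶠ[nhds x] f' := hf.mono fun y hy => hy.deriv
  have hdd : deriv (deriv f) x = f'' := by rw [he.deriv_eq, hf'.deriv]
  have hmax : IsLocalMax f x := isLocalMax_of_deriv_deriv_neg (by rwa [hdd]) h.deriv_eq_zero
    hf.self_of_nhds.continuousAt
  have hc : f =ᶠ[nhds x] fun _ => f x := by
    filter_upwards [h, hmax] with y h1 h2 using le_antisymm h2 h1
  have h0 : deriv (deriv f) x = 0 := by
    rw [hc.deriv.deriv_eq]; simp
  linarith

/-- The minimum principle for the resolvent equation of the Jacobi operator. -/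
lemma nonneg_of_resolvent_nonneg {a b s κ : ℝ} (ha : -1 < a) (hb : -1 < b) (hs : 0 ≤ s)
    (hκ : 0 ≤ κ) {w w' w'' : ℝ → ℝ} (hc : ContinuousOn w (Set.Icc (-1) 1))
    (hd : ∀ x ∈ Set.Icc (-1 : ℝ) 1, w x < 0 →
      (∀ᶠ y in nhds x, HasDerivAt w (w' y) y) ∧ HasDerivAt w' (w'' x) x ∧
        0 ≤ w x + s * (-((1 - x ^ 2) * w'' x) - (b - a - (a + b + 2) * x) * w' x + κ * w x)) :
    ∀ x ∈ Set.Icc (-1 : ℝ) 1, 0 ≤ w x := by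
  obtain ⟨z, hz, hmin⟩ := isCompact_Icc.exists_isMinOn (Set.nonempty_Icc.mpr (by norm_num)) hc
  suffices h : 0 ≤ w z from fun x hx => h.trans (hmin hx)
  by_contra! hneg
  obtain ⟨h1, h2, h3⟩ := hd z hz hneg
  have hdz := h1.self_of_nhds
  have hdir : ∀ y ∈ Set.Icc (-1 : ℝ) 1, 0 ≤ w' z * (y - z) := by
    intro y hy
    have := (IsMinOn.localize hmin).hasFDerivWithinAt_nonneg
      hdz.hasFDerivAt.hasFDerivWithinAt
      (sub_mem_posTangentConeAt_of_segment_subset ((convex_Icc (-1 : ℝ) 1).segment_subset hz hy))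
    simpa [mul_comm] using this
  have key : 0 ≤ (1 - z ^ 2) * w'' z + (b - a - (a + b + 2) * z) * w' z := by
    rcases eq_or_lt_of_le hz.1 with e | hz1
    · have := hdir 1 (by norm_num)
      rw [← e] at this ⊢
      have : 0 ≤ w' (-1) := by linarith
      have := mul_nonneg (show 0 ≤ 2 * b + 2 by linarith) this
      linarith
    rcases eq_or_lt_of_le hz.2 with e | hz2
    · have := hdir (-1) (by norm_num)
      rw [e] at this ⊢
      have : 0 ≤ -w' 1 := by linarith
      have := mul_nonneg (show 0 ≤ 2 * a + 2 by linarith) this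
      linarith
    have hloc : IsLocalMin w z := hmin.isLocalMin (Icc_mem_nhds hz1 hz2)
    rw [hloc.hasDerivAt_eq_zero hdz, mul_zero, add_zero]
    exact mul_nonneg (by nlinarith) (hloc.hasDerivAt_nonneg h1 h2)
  have := mul_nonneg hs key
  have := mul_nonneg hs hκ
  nlinarith

/-- The bottom of the spectrum in the function setting. -/
noncomputable def bottom (a b : ℝ) : ℝ := ((a + b + 1) / 2) ^ 2

lemma bottom_nonneg (a b : ℝ) : 0 ≤ bottom a b := sq_nonneg _

lemma eval_jacobiOp (a b x : ℝ) (p : ℝ[X]) :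
    (jacobiOp a b p).eval x = -((1 - x ^ 2) * (derivative (derivative p)).eval x) -
      (b - a - (a + b + 2) * x) * (derivative p).eval x := by
  simp only [jacobiOp_apply, eval_sub, eval_neg, eval_mul, eval_one, eval_pow, eval_X, eval_C]

/-- The operator `1 + s (L + ((a + b + 1) / 2)²)`, whose inverse is the resolvent. -/
noncomputable def resolventInv (a b s : ℝ) (p : ℝ[X]) : ℝ[X] :=
  p + s • (jacobiOp a b p + bottom a b • p)

lemma eval_resolventInv (a b s x : ℝ) (p : ℝ[X]) :
    (resolventInv a b s p).eval x = p.eval x + s * (-((1 - x ^ 2) *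
      (derivative (derivative p)).eval x) - (b - a - (a + b + 2) * x) * (derivative p).eval x +
        bottom a b * p.eval x) := by
  simp only [resolventInv, eval_add, eval_smul, eval_jacobiOp, smul_eq_mul]

lemma resolvent_nonneg {a b s : ℝ} (ha : -1 < a) (hb : -1 < b) (hs : 0 ≤ s) {p : ℝ[X]}
    (hp : ∀ x ∈ Set.Icc (-1 : ℝ) 1, 0 ≤ (resolventInv a b s p).eval x) :
    ∀ x ∈ Set.Icc (-1 : ℝ) 1, 0 ≤ p.eval x := by
  refine nonneg_of_resolvent_nonneg ha hb hs (bottom_nonneg a b) p.continuous.continuousOn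
    (w' := fun x => (derivative p).eval x) (w'' := fun x => (derivative (derivative p)).eval x)
    fun x hx _ => ⟨.of_forall fun y => p.hasDerivAt y, (derivative p).hasDerivAt x, ?_⟩
  rw [← eval_resolventInv]
  exact hp x hx

lemma hasDerivAt_one_sub_rpow (e : ℝ) {x : ℝ} (hx : x < 1) :
    HasDerivAt (fun y : ℝ => (1 - y) ^ e) (-(e * (1 - x) ^ (e - 1))) x := by
  refine (((hasDerivAt_id x).const_sub 1).rpow_const (p := e)
    (Or.inl (sub_pos.mpr hx).ne')).congr_deriv ?_
  simp

/-- One step of the comparison of the resolvents of type `(a + 2 e, b)` and `(a, b)`. -/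
lemma resolvent_comparison {a b s e : ℝ} (ha : -1 < a) (hb : -1 < b) (hs : 0 ≤ s) (he : 0 < e)
    (hae : 0 ≤ a + e) {u v : ℝ[X]}
    (hu : ∀ x ∈ Set.Icc (-1 : ℝ) 1, 0 ≤ (resolventInv (a + 2 * e) b s u).eval x)
    (huv : ∀ x ∈ Set.Icc (-1 : ℝ) 1, (1 - x) ^ e * (resolventInv (a + 2 * e) b s u).eval x ≤
      (resolventInv a b s v).eval x) :
    ∀ x ∈ Set.Icc (-1 : ℝ) 1, (1 - x) ^ e * u.eval x ≤ v.eval x := by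
  have hu' := resolvent_nonneg (by linarith : -1 < a + 2 * e) hb hs hu
  have hv' : ∀ x ∈ Set.Icc (-1 : ℝ) 1, 0 ≤ v.eval x :=
    resolvent_nonneg ha hb hs fun x hx =>
      (mul_nonneg (Real.rpow_nonneg (by linarith [hx.2]) e) (hu x hx)).trans (huv x hx)
  suffices h : ∀ x ∈ Set.Icc (-1 : ℝ) 1, 0 ≤ v.eval x - (1 - x) ^ e * u.eval x from
    fun x hx => sub_nonneg.mp (h x hx)
  have hcont : Continuous fun x : ℝ => (1 - x) ^ e :=
    (continuous_const.sub continuous_id).rpow_const fun _ => Or.inr he.le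
  refine nonneg_of_resolvent_nonneg ha hb hs (bottom_nonneg a b)
    (v.continuous.sub (hcont.mul u.continuous)).continuousOn
    (w' := fun x => (derivative v).eval x - (-(e * (1 - x) ^ (e - 1)) * u.eval x +
      (1 - x) ^ e * (derivative u).eval x))
    (w'' := fun x => (derivative (derivative v)).eval x -
      (e * (e - 1) * (1 - x) ^ (e - 1 - 1) * u.eval x +
        2 * (-(e * (1 - x) ^ (e - 1))) * (derivative u).eval x +
        (1 - x) ^ e * (derivative (derivative u)).eval x))
    fun x hx hneg => ?_
  have hx1 : x < 1 := by
    refine lt_of_le_of_ne hx.2 ?_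
    rintro rfl
    rw [sub_self, Real.zero_rpow he.ne', zero_mul, sub_zero] at hneg
    exact hneg.not_ge (hv' 1 hx)
  refine ⟨?_, ?_, ?_⟩
  · filter_upwards [Iio_mem_nhds hx1] with y hy
    exact (v.hasDerivAt y).sub ((hasDerivAt_one_sub_rpow e hy).mul (u.hasDerivAt y))
  · refine (((derivative v).hasDerivAt x).sub
      ((((hasDerivAt_one_sub_rpow (e - 1) hx1).const_mul e).neg.mul (u.hasDerivAt x)).add
        ((hasDerivAt_one_sub_rpow e hx1).mul ((derivative u).hasDerivAt x)))).congr_deriv ?_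
    simp only [Pi.neg_apply]
    ring
  · have hy : 0 < 1 - x := sub_pos.mpr hx1
    have h1 : (1 - x) ^ (e - 1) = (1 - x) ^ e / (1 - x) := Real.rpow_sub_one hy.ne' e
    have h2 : (1 - x) ^ (e - 1 - 1) = (1 - x) ^ e / (1 - x) ^ 2 := by
      rw [Real.rpow_sub_one hy.ne', h1]; field_simp
    have h3 := huv x hx
    have h4 : 0 ≤ s * (2 * e * (a + e) / (1 - x)) * ((1 - x) ^ e * u.eval x) :=
      mul_nonneg (mul_nonneg hs (div_nonneg (mul_nonneg (by linarith) hae) hy.le))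
        (mul_nonneg (Real.rpow_nonneg hy.le e) (hu' x hx))
    rw [eval_resolventInv, eval_resolventInv] at h3
    refine (add_nonneg (sub_nonneg.mpr h3) h4).trans_eq ?_
    rw [h1, h2, bottom, bottom]
    field_simp
    ring

lemma resolventInv_jacobiSum (a b s : ℝ) (I : Finset ℕ) (c : ℕ → ℝ) :
    resolventInv a b s (∑ n ∈ I, c n • jacobiPoly a b n) =
      ∑ n ∈ I, (c n * (1 + s * (eigval a b n + bottom a b))) • jacobiPoly a b n := by
  simp only [resolventInv, map_sum, map_smul, jacobiOp_jacobiPoly, Finset.smul_sum,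
    ← Finset.sum_add_distrib]
  refine Finset.sum_congr rfl fun n _ => ?_
  module

lemma resolventInv_jacobiSum_succ {a b s : ℝ} (ha : -1 < a) (hb : -1 < b) (hs : 0 ≤ s)
    (I : Finset ℕ) (c : ℕ → ℝ) (k : ℕ) :
    resolventInv a b s (∑ n ∈ I,
      (c n * ((1 + s * (eigval a b n + bottom a b)) ^ (k + 1))⁻¹) • jacobiPoly a b n) =
      ∑ n ∈ I, (c n * ((1 + s * (eigval a b n + bottom a b)) ^ k)⁻¹) • jacobiPoly a b n := by
  rw [resolventInv_jacobiSum]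
  refine Finset.sum_congr rfl fun n _ => ?_
  congr 1
  have : 0 < 1 + s * (eigval a b n + bottom a b) := by
    have := mul_nonneg hs (add_nonneg (eigval_nonneg ha hb n) (bottom_nonneg a b))
    linarith
  field_simp
  ring

lemma resolvent_pow_comparison {a b s e : ℝ} (ha : -1 < a) (hb : -1 < b) (hs : 0 ≤ s)
    (he : 0 < e) (hae : 0 ≤ a + e) {I I' : Finset ℕ} {c c' : ℕ → ℝ}
    (hu : ∀ x ∈ Set.Icc (-1 : ℝ) 1, 0 ≤ (∑ n ∈ I, c n • jacobiPoly (a + 2 * e) b n).eval x)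
    (huv : ∀ x ∈ Set.Icc (-1 : ℝ) 1,
      (1 - x) ^ e * (∑ n ∈ I, c n • jacobiPoly (a + 2 * e) b n).eval x ≤
        (∑ n ∈ I', c' n • jacobiPoly a b n).eval x) (k : ℕ) :
    ∀ x ∈ Set.Icc (-1 : ℝ) 1, (1 - x) ^ e * (∑ n ∈ I, (c n *
      ((1 + s * (eigval (a + 2 * e) b n + bottom (a + 2 * e) b)) ^ k)⁻¹) •
        jacobiPoly (a + 2 * e) b n).eval x ≤
      (∑ n ∈ I', (c' n * ((1 + s * (eigval a b n + bottom a b)) ^ k)⁻¹) •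
        jacobiPoly a b n).eval x := by
  have hA : -1 < a + 2 * e := by linarith
  have hpos : ∀ k : ℕ, ∀ x ∈ Set.Icc (-1 : ℝ) 1, 0 ≤ (∑ n ∈ I, (c n *
      ((1 + s * (eigval (a + 2 * e) b n + bottom (a + 2 * e) b)) ^ k)⁻¹) •
        jacobiPoly (a + 2 * e) b n).eval x := by
    intro k
    induction k with
    | zero => simpa using hu
    | succ k ih =>
      refine resolvent_nonneg hA hb hs ?_
      rwa [resolventInv_jacobiSum_succ hA hb hs]
  induction k with
  | zero => simpa using huv
  | succ k ih =>
    refine resolvent_comparison ha hb hs he hae ?_ ?_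
    · rw [resolventInv_jacobiSum_succ hA hb hs]
      exact hpos k
    · rwa [resolventInv_jacobiSum_succ hA hb hs, resolventInv_jacobiSum_succ ha hb hs]

lemma tendsto_resolvent_pow (t μ : ℝ) :
    Filter.Tendsto (fun k : ℕ => ((1 + t / k * μ) ^ k)⁻¹) Filter.atTop
      (nhds (Real.exp (-t * μ))) := by
  rw [neg_mul, Real.exp_neg]
  refine Filter.Tendsto.inv₀ ?_ (Real.exp_pos _).ne'
  refine (Real.tendsto_one_add_div_pow_exp (t * μ)).congr fun k => ?_
  rw [div_mul_eq_mul_div]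

/-- Comparison of the heat semigroups of type `(a + 2 e, b)` and `(a, b)` on polynomials. -/
lemma heat_comparison_poly {a b t e : ℝ} (ha : -1 < a) (hb : -1 < b) (ht : 0 ≤ t)
    (he : 0 < e) (hae : 0 ≤ a + e) {I I' : Finset ℕ} {c c' : ℕ → ℝ}
    (hu : ∀ x ∈ Set.Icc (-1 : ℝ) 1, 0 ≤ (∑ n ∈ I, c n • jacobiPoly (a + 2 * e) b n).eval x)
    (huv : ∀ x ∈ Set.Icc (-1 : ℝ) 1,
      (1 - x) ^ e * (∑ n ∈ I, c n • jacobiPoly (a + 2 * e) b n).eval x ≤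
        (∑ n ∈ I', c' n • jacobiPoly a b n).eval x) {x : ℝ} (hx : x ∈ Set.Icc (-1 : ℝ) 1) :
    (1 - x) ^ e * ∑ n ∈ I, c n *
      Real.exp (-t * (eigval (a + 2 * e) b n + bottom (a + 2 * e) b)) *
        (jacobiPoly (a + 2 * e) b n).eval x ≤
      ∑ n ∈ I', c' n * Real.exp (-t * (eigval a b n + bottom a b)) *
        (jacobiPoly a b n).eval x := by
  refine le_of_tendsto_of_tendsto' (b := Filter.atTop)
    ((tendsto_finsetSum _ fun n _ =>
      ((tendsto_resolvent_pow t _).const_mul (c n)).mul_const _).const_mul _)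
    (tendsto_finsetSum _ fun n _ =>
      ((tendsto_resolvent_pow t _).const_mul (c' n)).mul_const _) fun k => ?_
  have := resolvent_pow_comparison ha hb (s := t / k) (by positivity) he hae hu huv k x hx
  simpa only [eval_finsetSum, eval_smul, smul_eq_mul] using this

lemma wt_nonneg (a b : ℝ) {x : ℝ} (hx : x ∈ Set.Icc (-1 : ℝ) 1) : 0 ≤ wt a b x :=
  mul_nonneg (Real.rpow_nonneg (by linarith [hx.2]) _) (Real.rpow_nonneg (by linarith [hx.1]) _)

lemma wt_pos (a b : ℝ) {x : ℝ} (hx : x ∈ Set.Ioo (-1 : ℝ) 1) : 0 < wt a b x :=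
  mul_pos (Real.rpow_pos_of_pos (by linarith [hx.2]) _)
    (Real.rpow_pos_of_pos (by linarith [hx.1]) _)

lemma continuousOn_wt (a b : ℝ) : ContinuousOn (wt a b) (Set.Ioo (-1) 1) :=
  fun _ hx => (hasDerivAt_wt a b hx).continuousAt.continuousWithinAt

lemma intervalIntegrable_wt {a b : ℝ} (ha : -1 < a) (hb : -1 < b) :
    IntervalIntegrable (wt a b) volume (-1) 1 := by
  refine IntervalIntegrable.trans (b := 0) ?_ ?_
  · have h : IntervalIntegrable (fun x : ℝ => (1 + x) ^ b) volume (-1) 0 := by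
      have := (intervalIntegral.intervalIntegrable_rpow' (a := 0) (b := 1) hb).comp_add_left 1
      simpa using this
    refine h.continuousOn_mul ?_
    refine ContinuousOn.rpow_const (by fun_prop) fun x hx => Or.inl ?_
    rw [Set.uIcc_of_le (by norm_num)] at hx
    linarith [hx.2]
  · have h : IntervalIntegrable (fun x : ℝ => (1 - x) ^ a) volume 0 1 := by
      have := (intervalIntegral.intervalIntegrable_rpow' (a := 1) (b := 0) ha).comp_sub_left 1
      simpa using this
    refine h.mul_continuousOn ?_
    refine ContinuousOn.rpow_const (by fun_prop) fun x hx => Or.inl ?_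
    rw [Set.uIcc_of_le (by norm_num)] at hx
    linarith [hx.1]

lemma integrableOn_mul_wt {a b : ℝ} (ha : -1 < a) (hb : -1 < b) {f : ℝ → ℝ}
    (hf : ContinuousOn f (Set.Icc (-1) 1)) :
    IntegrableOn (fun x => f x * wt a b x) (Set.Icc (-1) 1) := by
  rw [← intervalIntegrable_iff_integrableOn_Icc_of_le (by norm_num)]
  refine (intervalIntegrable_wt ha hb).continuousOn_mul ?_
  rwa [Set.uIcc_of_le (by norm_num)]

/-- Green's formula for the Jacobi operator. -/
lemma integral_jacobiOp_mul {a b : ℝ} (ha : -1 < a) (hb : -1 < b) (p q : ℝ[X]) :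
    ∫ x in Set.Icc (-1 : ℝ) 1, (jacobiOp a b p).eval x * q.eval x * wt a b x =
      ∫ x in Set.Icc (-1 : ℝ) 1,
        (derivative p).eval x * (derivative q).eval x * wt (a + 1) (b + 1) x := by
  have i1 : IntegrableOn (fun x => (jacobiOp a b p).eval x * q.eval x * wt a b x)
      (Set.Icc (-1) 1) := integrableOn_mul_wt ha hb (by fun_prop)
  have i2 : IntegrableOn (fun x => (derivative p).eval x * (derivative q).eval x *
      wt (a + 1) (b + 1) x) (Set.Icc (-1) 1) :=
    integrableOn_mul_wt (by linarith) (by linarith) (by fun_prop)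
  have hcw : Continuous (wt (a + 1) (b + 1)) := by
    refine Continuous.mul ?_ ?_
    · exact (continuous_const.sub continuous_id).rpow_const fun _ => Or.inr (by linarith)
    · exact (continuous_const.add continuous_id).rpow_const fun _ => Or.inr (by linarith)
  have key := intervalIntegral.integral_eq_sub_of_hasDerivAt_of_le (a := -1) (b := 1)
    (f := fun x => wt (a + 1) (b + 1) x * ((derivative p).eval x * q.eval x))
    (f' := fun x => (derivative p).eval x * (derivative q).eval x * wt (a + 1) (b + 1) x -
      (jacobiOp a b p).eval x * q.eval x * wt a b x) (by norm_num)
    (by fun_prop) ?_ ?_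
  · rw [intervalIntegral.integral_of_le (by norm_num), ← integral_Icc_eq_integral_Ioc,
      integral_sub i2 i1] at key
    have e1 : wt (a + 1) (b + 1) 1 = 0 := by
      rw [wt, sub_self, Real.zero_rpow (by linarith), zero_mul]
    have e2 : wt (a + 1) (b + 1) (-1) = 0 := by
      rw [wt, add_neg_cancel, Real.zero_rpow (by linarith), mul_zero]
    rw [e1, e2] at key
    linarith
  · intro x hx
    refine ((hasDerivAt_wt (a + 1) (b + 1) hx).mul
      (((derivative p).hasDerivAt x).fun_mul (q.hasDerivAt x))).congr_deriv ?_
    rw [wt_add_one a b hx, add_sub_cancel_right, add_sub_cancel_right, eval_jacobiOp]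
    ring
  · rw [intervalIntegrable_iff_integrableOn_Icc_of_le (by norm_num)]
    exact i2.sub i1

lemma integral_jacobiPoly_mul_of_ne {a b : ℝ} (ha : -1 < a) (hb : -1 < b) {m n : ℕ}
    (hmn : m ≠ n) : ∫ x in Set.Icc (-1 : ℝ) 1,
      (jacobiPoly a b m).eval x * (jacobiPoly a b n).eval x * wt a b x = 0 := by
  have h1 := integral_jacobiOp_mul ha hb (jacobiPoly a b m) (jacobiPoly a b n)
  have h2 := integral_jacobiOp_mul ha hb (jacobiPoly a b n) (jacobiPoly a b m)
  simp only [jacobiOp_jacobiPoly, eval_smul, smul_eq_mul, mul_assoc] at h1 h2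
  rw [integral_const_mul] at h1 h2
  have h3 : eigval a b m - eigval a b n ≠ 0 :=
    sub_ne_zero.mpr fun h => hmn (eigval_injective ha hb h)
  refine (mul_eq_zero.mp ?_).resolve_left h3
  simp only [mul_assoc, mul_left_comm (eval _ (jacobiPoly a b n))] at h1 h2 ⊢
  simp only [mul_left_comm (eval _ (derivative (jacobiPoly a b n)))] at h2
  rw [sub_mul, h1, h2, sub_self]

lemma hJacobi_eq (a b : ℝ) (n : ℕ) : hJacobi a b n =
    ∫ x in Set.Icc (-1 : ℝ) 1, (jacobiPoly a b n).eval x ^ 2 * wt a b x := by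
  rw [hJacobi, integral_Icc_eq_integral_Ioo, integral_Icc_eq_integral_Ioo]
  refine setIntegral_congr_fun measurableSet_Ioo fun x hx => ?_
  simp only [jacobiP_eq_eval a b n hx, wt, mul_assoc]

lemma integral_derivative_sq {a b : ℝ} (ha : -1 < a) (hb : -1 < b) (n : ℕ) :
    ∫ x in Set.Icc (-1 : ℝ) 1, (derivative (jacobiPoly a b n)).eval x ^ 2 *
      wt (a + 1) (b + 1) x = eigval a b n * hJacobi a b n := by
  simp only [sq]
  rw [← integral_jacobiOp_mul ha hb, hJacobi_eq, ← integral_const_mul]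
  simp only [jacobiOp_jacobiPoly, eval_smul, smul_eq_mul, mul_assoc, sq]

lemma exists_const_integral_le {a b r : ℝ} (ha : -1 < a) (hb : -1 < b) (hr0 : 0 < r)
    (hr : r < 1) : ∃ c > 0, ∀ q : ℝ → ℝ, Continuous q → (∀ x, 0 ≤ q x) →
      c * ∫ x in Set.Icc (-r) r, q x ≤ ∫ x in Set.Icc (-1 : ℝ) 1, q x * wt a b x := by
  have hsub : Set.Icc (-r) r ⊆ Set.Ioo (-1 : ℝ) 1 := fun x hx =>
    ⟨by linarith [hx.1], by linarith [hx.2]⟩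
  obtain ⟨z, hz, hmin⟩ := isCompact_Icc.exists_isMinOn (Set.nonempty_Icc.mpr (by linarith))
    ((continuousOn_wt a b).mono hsub)
  refine ⟨wt a b z, wt_pos a b (hsub hz), fun q hq hq0 => ?_⟩
  have hi := integrableOn_mul_wt ha hb (f := q) hq.continuousOn
  have hsub' : Set.Icc (-r) r ⊆ Set.Icc (-1 : ℝ) 1 := hsub.trans Set.Ioo_subset_Icc_self
  rw [← integral_const_mul]
  calc ∫ x in Set.Icc (-r) r, wt a b z * q x
      ≤ ∫ x in Set.Icc (-r) r, q x * wt a b x := by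
        refine setIntegral_mono_on ((hq.const_mul _).continuousOn.integrableOn_Icc)
          (hi.mono_set hsub') measurableSet_Icc fun x hx => ?_
        rw [mul_comm]
        exact mul_le_mul_of_nonneg_left (hmin hx) (hq0 x)
    _ ≤ _ := by
        refine setIntegral_mono_set hi ?_ hsub'.eventuallyLE
        refine (ae_restrict_iff' measurableSet_Icc).mpr (.of_forall fun x hx => ?_)
        exact mul_nonneg (hq0 x) (wt_nonneg a b hx)

/-- A one-dimensional Sobolev inequality. -/
lemma eval_sq_le_integral {r : ℝ} (hr0 : 0 < r) (p : ℝ[X]) {x : ℝ} (hx : x ∈ Set.Icc (-r) r) :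
    2 * r * p.eval x ^ 2 ≤ (∫ y in Set.Icc (-r) r, p.eval y ^ 2) + 2 * r *
      ∫ y in Set.Icc (-r) r, (p.eval y ^ 2 + (derivative p).eval y ^ 2) := by
  set D := ∫ y in Set.Icc (-r) r, (p.eval y ^ 2 + (derivative p).eval y ^ 2) with hD
  have hle : ∀ y ∈ Set.Icc (-r) r, p.eval x ^ 2 ≤ p.eval y ^ 2 + D := by
    intro y hy
    have h1 : ∫ z in y..x, 2 * p.eval z * (derivative p).eval z =
        p.eval x ^ 2 - p.eval y ^ 2 := by
      refine intervalIntegral.integral_eq_sub_of_hasDerivAt (f := fun z => p.eval z ^ 2)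
        (fun z _ => ?_) (Continuous.intervalIntegrable (by fun_prop) _ _)
      refine ((p.hasDerivAt z).pow 2).congr_deriv ?_
      simp
    have hsub : Set.uIoc y x ⊆ Set.Icc (-r) r :=
      Set.uIoc_subset_uIcc.trans (Set.uIcc_subset_Icc hy hx)
    have h2 : ∫ z in y..x, 2 * p.eval z * (derivative p).eval z ≤ D := by
      refine (Real.le_norm_self _).trans
        ((intervalIntegral.norm_integral_le_integral_norm_uIoc).trans ?_)
      refine (setIntegral_mono_set (Continuous.continuousOn (by fun_prop)).integrableOn_Icc
        (.of_forall fun z => norm_nonneg _) hsub.eventuallyLE).trans ?_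
      refine setIntegral_mono_on (Continuous.continuousOn (by fun_prop)).integrableOn_Icc
        (Continuous.continuousOn (by fun_prop)).integrableOn_Icc measurableSet_Icc fun z _ => ?_
      rw [Real.norm_eq_abs, abs_le]
      constructor <;> nlinarith [sq_nonneg (p.eval z + (derivative p).eval z),
        sq_nonneg (p.eval z - (derivative p).eval z)]
    linarith
  have hi : ∀ c : ℝ, IntegrableOn (fun _ : ℝ => c) (Set.Icc (-r) r) := fun c =>
    continuousOn_const.integrableOn_Icc
  have hv : ∀ c : ℝ, ∫ _ in Set.Icc (-r) r, c = 2 * r * c := by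
    intro c
    rw [setIntegral_const, Real.volume_real_Icc_of_le (by linarith), smul_eq_mul]
    ring
  have hip : IntegrableOn (fun y => p.eval y ^ 2) (Set.Icc (-r) r) :=
    (Continuous.continuousOn (by fun_prop)).integrableOn_Icc
  have := setIntegral_mono_on (hi (p.eval x ^ 2)) (hip.add (hi D)) measurableSet_Icc hle
  rw [hv] at this
  refine this.trans_eq ?_
  rw [← hv]
  exact integral_add hip (hi D)

lemma exists_const_jacobiPoly_sq_le {a b r : ℝ} (ha : -1 < a) (hb : -1 < b) (hr0 : 0 < r)
    (hr : r < 1) : ∃ C > 0, ∀ n : ℕ, ∀ x ∈ Set.Icc (-r) r,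
      (jacobiPoly a b n).eval x ^ 2 ≤ C * (1 + eigval a b n) * hJacobi a b n := by
  obtain ⟨c, hc, h1⟩ := exists_const_integral_le ha hb hr0 hr
  obtain ⟨d, hd, h2⟩ := exists_const_integral_le (a := a + 1) (b := b + 1)
    (by linarith) (by linarith) hr0 hr
  refine ⟨(c⁻¹ + 2 * r * (c⁻¹ + d⁻¹)) / (2 * r), by positivity, fun n x hx => ?_⟩
  have hh : 0 ≤ hJacobi a b n := by
    rw [hJacobi_eq]
    exact setIntegral_nonneg measurableSet_Icc fun x hx =>
      mul_nonneg (sq_nonneg _) (wt_nonneg a b hx)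
  have k1 := h1 (fun y => (jacobiPoly a b n).eval y ^ 2) (by fun_prop) fun _ => sq_nonneg _
  have k2 := h2 (fun y => (derivative (jacobiPoly a b n)).eval y ^ 2) (by fun_prop)
    fun _ => sq_nonneg _
  rw [← hJacobi_eq] at k1
  rw [integral_derivative_sq ha hb] at k2
  have k3 := eval_sq_le_integral hr0 (jacobiPoly a b n) hx
  rw [integral_add (Continuous.continuousOn (by fun_prop)).integrableOn_Icc
    (Continuous.continuousOn (by fun_prop)).integrableOn_Icc] at k3
  rw [← le_inv_mul_iff₀ hc] at k1
  rw [← le_inv_mul_iff₀ hd] at k2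
  have hl := eigval_nonneg ha hb n
  rw [div_mul_eq_mul_div, div_mul_eq_mul_div, le_div_iff₀ (by positivity)]
  have e1 : 0 ≤ c⁻¹ * (eigval a b n * hJacobi a b n) := by positivity
  have e2 : 0 ≤ d⁻¹ * hJacobi a b n := by positivity
  have k4 := mul_le_mul_of_nonneg_left
    (add_le_add (k1.trans (le_add_of_nonneg_right e1)) (k2.trans (le_add_of_nonneg_right e2)))
    (by linarith : 0 ≤ 2 * r)
  nlinarith

lemma hJacobi_pos {a b : ℝ} (ha : -1 < a) (hb : -1 < b) (n : ℕ) : 0 < hJacobi a b n := by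
  obtain ⟨C, hC, h⟩ := exists_const_jacobiPoly_sq_le ha hb (r := 1 / 2) (by norm_num) (by norm_num)
  by_contra! hle
  refine jacobiPoly_ne_zero b ha n (eq_zero_of_infinite_isRoot _
    ((Set.Icc_infinite (by norm_num : -(1 / 2 : ℝ) < 1 / 2)).mono fun x hx => ?_))
  have h1 : (jacobiPoly a b n).eval x ^ 2 ≤ 0 := (h n x hx).trans
    (mul_nonpos_of_nonneg_of_nonpos
      (mul_nonneg hC.le (by linarith [eigval_nonneg ha hb n])) hle)
  exact pow_eq_zero_iff two_ne_zero |>.mp (le_antisymm h1 (sq_nonneg _))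

/-- The coefficient of `J_n(x) J_n(y)` in the expansion of the Jacobi heat kernel. -/
noncomputable def heatCoeff (a b t : ℝ) (n : ℕ) : ℝ :=
  Real.exp (-t * (eigval a b n + bottom a b)) / hJacobi a b n

/-- The Jacobi heat kernel, with the eigenvalues of the function setting. -/
noncomputable def heatKer (a b t x y : ℝ) : ℝ :=
  ∑' n, heatCoeff a b t n * (jacobiPoly a b n).eval x * (jacobiPoly a b n).eval y

/-- The Jacobi heat semigroup defined through the Fourier–Jacobi expansion. -/
noncomputable def heatOp (a b t : ℝ) (f : ℝ → ℝ) (x : ℝ) : ℝ :=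
  ∑' n, heatCoeff a b t n * (jacobiPoly a b n).eval x *
    ∫ y in Set.Icc (-1 : ℝ) 1, (jacobiPoly a b n).eval y * f y * wt a b y

lemma heatCoeff_pos {a b : ℝ} (ha : -1 < a) (hb : -1 < b) (t : ℝ) (n : ℕ) :
    0 < heatCoeff a b t n := div_pos (Real.exp_pos _) (hJacobi_pos ha hb n)

lemma summable_exp_mul_eigval {a b t : ℝ} (ha : -1 < a) (hb : -1 < b) (ht : 0 < t) :
    Summable fun n => Real.exp (-t * (eigval a b n + bottom a b)) * (1 + eigval a b n) := by
  have hg : Summable fun n : ℕ => (1 + 2 / t) * Real.exp (t / 2) * Real.exp (n * (-(t / 2))) :=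
    (Real.summable_exp_nat_mul_iff.mpr (by linarith)).mul_left _
  refine hg.of_nonneg_of_le
    (fun n => mul_nonneg (Real.exp_pos _).le (by linarith [eigval_nonneg ha hb n])) fun n => ?_
  have hl := eigval_nonneg ha hb n
  have hn : (n : ℝ) - 1 ≤ eigval a b n := by
    have h0 : (0 : ℝ) ≤ n := n.cast_nonneg
    have h1 : (n : ℝ) * (n - 1) ≤ eigval a b n :=
      mul_le_mul_of_nonneg_left (by linarith) h0
    nlinarith [sq_nonneg ((n : ℝ) - 1)]
  have hB := bottom_nonneg a b
  set l := eigval a b n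
  have h1 : 1 + l ≤ (1 + 2 / t) * Real.exp (t / 2 * l) := by
    have h2 := Real.add_one_le_exp (t / 2 * l)
    have h3 : 0 ≤ t / 2 * l := by positivity
    have h4 : 1 ≤ Real.exp (t / 2 * l) := by linarith
    have h5 : l ≤ 2 / t * Real.exp (t / 2 * l) := by
      rw [div_mul_eq_mul_div, le_div_iff₀ ht]
      linarith
    linarith
  calc Real.exp (-t * (l + bottom a b)) * (1 + l)
      ≤ Real.exp (-t * l) * ((1 + 2 / t) * Real.exp (t / 2 * l)) := by
        refine mul_le_mul (Real.exp_le_exp.mpr ?_) h1 (by linarith) (Real.exp_pos _).le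
        nlinarith
    _ = (1 + 2 / t) * Real.exp (-(t / 2) * l) := by
        rw [mul_left_comm, ← Real.exp_add]; congr 2; ring
    _ ≤ (1 + 2 / t) * Real.exp (t / 2 + n * (-(t / 2))) := by
        refine mul_le_mul_of_nonneg_left (Real.exp_le_exp.mpr ?_) (by positivity)
        nlinarith
    _ = _ := by rw [Real.exp_add, mul_assoc]

/-- Uniform summability of the expansion of the heat kernel on compact sets. -/
lemma exists_summable_bound {a b t r : ℝ} (ha : -1 < a) (hb : -1 < b) (ht : 0 < t)
    (hr0 : 0 < r) (hr : r < 1) : ∃ B : ℕ → ℝ, Summable B ∧ ∀ n, ∀ x ∈ Set.Icc (-r) r,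
      heatCoeff a b t n * (jacobiPoly a b n).eval x ^ 2 ≤ B n := by
  obtain ⟨C, hC, h⟩ := exists_const_jacobiPoly_sq_le ha hb hr0 hr
  refine ⟨_, (summable_exp_mul_eigval ha hb ht).mul_left C, fun n x hx => ?_⟩
  have hh := hJacobi_pos ha hb n
  refine (mul_le_mul_of_nonneg_left (h n x hx) (heatCoeff_pos ha hb t n).le).trans_eq ?_
  rw [heatCoeff]
  field_simp

lemma exists_mem_Icc_symm {x : ℝ} (hx : x ∈ Set.Ioo (-1 : ℝ) 1) :
    ∃ r, 0 < r ∧ r < 1 ∧ x ∈ Set.Ioo (-r) r := by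
  have h : |x| < 1 := abs_lt.mpr hx
  obtain ⟨r, h1, h2⟩ := exists_between h
  exact ⟨r, (abs_nonneg x).trans_lt h1, h2, abs_lt.mp h1⟩

lemma continuousOn_heatKer {a b t x : ℝ} (ha : -1 < a) (hb : -1 < b) (ht : 0 < t)
    (hx : x ∈ Set.Ioo (-1 : ℝ) 1) : ContinuousOn (heatKer a b t x) (Set.Ioo (-1) 1) := by
  intro y hy
  obtain ⟨r, hr0, hr, hxr⟩ := exists_mem_Icc_symm hx
  obtain ⟨r', hr0', hr', hyr⟩ := exists_mem_Icc_symm hy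
  obtain ⟨B, hB, h⟩ := exists_summable_bound (t := t) ha hb ht hr0 hr
  obtain ⟨B', hB', h'⟩ := exists_summable_bound (t := t) ha hb ht hr0' hr'
  have hc : ContinuousOn (heatKer a b t x) (Set.Icc (-r') r') := by
    refine continuousOn_tsum (u := fun n => B n + B' n)
      (fun n => Continuous.continuousOn (by fun_prop)) (hB.add hB') fun n z hz => ?_
    have hg := heatCoeff_pos ha hb t n
    have h1 := h n x (Set.Ioo_subset_Icc_self hxr)
    have h2 := h' n z hz
    rw [norm_mul, norm_mul, Real.norm_of_nonneg hg.le, Real.norm_eq_abs, Real.norm_eq_abs,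
      mul_assoc]
    rw [← sq_abs] at h1 h2
    refine le_trans ?_ (add_le_add h1 h2)
    rw [← mul_add]
    refine mul_le_mul_of_nonneg_left ?_ hg.le
    nlinarith [sq_nonneg (|eval x (jacobiPoly a b n)| - |eval z (jacobiPoly a b n)|)]
  exact (hc.continuousAt (Icc_mem_nhds hyr.1 hyr.2)).continuousWithinAt

lemma exists_summable_bound_integral {a b t x : ℝ} (ha : -1 < a) (hb : -1 < b) (ht : 0 < t)
    (hx : x ∈ Set.Ioo (-1 : ℝ) 1) : ∃ B : ℕ → ℝ, Summable B ∧ (∀ n, 0 ≤ B n) ∧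
      ∀ (f : ℝ → ℝ) (M : ℝ), ContinuousOn f (Set.Icc (-1) 1) →
        (∀ y ∈ Set.Icc (-1 : ℝ) 1, |f y| ≤ M) → ∀ n,
        heatCoeff a b t n * |(jacobiPoly a b n).eval x| *
          ∫ y in Set.Icc (-1 : ℝ) 1, |(jacobiPoly a b n).eval y * f y * wt a b y| ≤ M * B n := by
  obtain ⟨r, hr0, hr, hxr⟩ := exists_mem_Icc_symm hx
  obtain ⟨B, hB, h⟩ := exists_summable_bound (t := t) ha hb ht hr0 hr
  set W := ∫ y in Set.Icc (-1 : ℝ) 1, (1 : ℝ) * wt a b y with hW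
  have hW0 : 0 ≤ W := setIntegral_nonneg measurableSet_Icc fun y hy =>
    mul_nonneg zero_le_one (wt_nonneg a b hy)
  have hE : Summable fun n => Real.exp (-t * (eigval a b n + bottom a b)) := by
    refine (summable_exp_mul_eigval ha hb ht).of_nonneg_of_le (fun n => (Real.exp_pos _).le)
      fun n => le_mul_of_one_le_right (Real.exp_pos _).le (by linarith [eigval_nonneg ha hb n])
  have hBpos : ∀ n, 0 ≤ B n := fun n =>
    (mul_nonneg (heatCoeff_pos ha hb t n).le (sq_nonneg _)).trans
      (h n x (Set.Ioo_subset_Icc_self hxr))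
  refine ⟨fun n => W * B n + Real.exp (-t * (eigval a b n + bottom a b)),
    (hB.mul_left W).add hE, fun n => add_nonneg (mul_nonneg hW0 (hBpos n)) (Real.exp_pos _).le,
    fun f M hf hM n => ?_⟩
  have hM0 : 0 ≤ M := (abs_nonneg _).trans (hM 0 (by norm_num))
  have hg := heatCoeff_pos ha hb t n
  have hh := hJacobi_pos ha hb n
  set q := (jacobiPoly a b n).eval x
  have i1 : IntegrableOn (fun y => |q| * |(jacobiPoly a b n).eval y * f y * wt a b y|)
      (Set.Icc (-1) 1) :=
    ((integrableOn_mul_wt ha hb ((Polynomial.continuous _).continuousOn.mul hf)).abs).const_mul _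
  have i2 : IntegrableOn (fun y => (1 : ℝ) * wt a b y) (Set.Icc (-1) 1) :=
    integrableOn_mul_wt ha hb continuousOn_const
  have i3 : IntegrableOn (fun y => (jacobiPoly a b n).eval y ^ 2 * wt a b y) (Set.Icc (-1) 1) :=
    integrableOn_mul_wt ha hb (by fun_prop)
  have key : |q| * ∫ y in Set.Icc (-1 : ℝ) 1, |(jacobiPoly a b n).eval y * f y * wt a b y| ≤
      M * (q ^ 2 * W + hJacobi a b n) := by
    rw [hJacobi_eq, hW, ← integral_const_mul, ← integral_const_mul,
      ← integral_add (i2.const_mul _) i3, ← integral_const_mul]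
    refine setIntegral_mono_on i1 (((i2.const_mul _).add i3).const_mul _) measurableSet_Icc
      fun y hy => ?_
    have hw := wt_nonneg a b hy
    rw [abs_mul, abs_mul, abs_of_nonneg hw]
    set p := (jacobiPoly a b n).eval y
    have h1 : |q| * |p| ≤ q ^ 2 + p ^ 2 := by
      rw [← sq_abs q, ← sq_abs p]
      nlinarith [sq_nonneg (|q| - |p|), sq_nonneg |q|, sq_nonneg |p|]
    have h2 : |q| * |p| * |f y| ≤ (q ^ 2 + p ^ 2) * M :=
      mul_le_mul h1 (hM y hy) (abs_nonneg _) (by positivity)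
    have := mul_le_mul_of_nonneg_right h2 hw
    linarith
  have h1 : W * (heatCoeff a b t n * q ^ 2) ≤ W * B n :=
    mul_le_mul_of_nonneg_left (h n x (Set.Ioo_subset_Icc_self hxr)) hW0
  rw [mul_assoc]
  refine (mul_le_mul_of_nonneg_left key hg.le).trans ?_
  have h2 : heatCoeff a b t n * hJacobi a b n =
      Real.exp (-t * (eigval a b n + bottom a b)) := by
    rw [heatCoeff, div_mul_cancel₀ _ hh.ne']
  beta_reduce
  rw [← h2]
  have := mul_le_mul_of_nonneg_left h1 hM0
  linarith

lemma summable_heatOp {a b t x : ℝ} (ha : -1 < a) (hb : -1 < b) (ht : 0 < t)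
    (hx : x ∈ Set.Ioo (-1 : ℝ) 1) {f : ℝ → ℝ} (hf : ContinuousOn f (Set.Icc (-1) 1)) :
    Summable fun n => heatCoeff a b t n * (jacobiPoly a b n).eval x *
      ∫ y in Set.Icc (-1 : ℝ) 1, (jacobiPoly a b n).eval y * f y * wt a b y := by
  obtain ⟨B, hB, -, h⟩ := exists_summable_bound_integral (t := t) ha hb ht hx
  obtain ⟨M, hM⟩ := isCompact_Icc.exists_bound_of_continuousOn hf
  refine Summable.of_norm_bounded (hB.mul_left M) fun n => ?_
  refine le_trans ?_ (h f M hf hM n)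
  rw [norm_mul, norm_mul, Real.norm_of_nonneg (heatCoeff_pos ha hb t n).le, Real.norm_eq_abs]
  exact mul_le_mul_of_nonneg_left (norm_integral_le_integral_norm _)
    (mul_nonneg (heatCoeff_pos ha hb t n).le (abs_nonneg _))

lemma heatOp_eq_integral {a b t x : ℝ} (ha : -1 < a) (hb : -1 < b) (ht : 0 < t)
    (hx : x ∈ Set.Ioo (-1 : ℝ) 1) {f : ℝ → ℝ} (hf : ContinuousOn f (Set.Icc (-1) 1)) :
    heatOp a b t f x = ∫ y in Set.Icc (-1 : ℝ) 1, heatKer a b t x y * (f y * wt a b y) := by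
  obtain ⟨B, hB, -, h⟩ := exists_summable_bound_integral (t := t) ha hb ht hx
  obtain ⟨M, hM⟩ := isCompact_Icc.exists_bound_of_continuousOn hf
  have hs := hasSum_integral_of_summable_integral_norm (μ := volume.restrict (Set.Icc (-1 : ℝ) 1))
    (F := fun n y => heatCoeff a b t n * (jacobiPoly a b n).eval x *
      ((jacobiPoly a b n).eval y * f y * wt a b y))
    (fun n => (integrableOn_mul_wt ha hb
      ((Polynomial.continuous _).continuousOn.mul hf)).const_mul _)
    (Summable.of_nonneg_of_le (fun n => integral_nonneg fun y => norm_nonneg _)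
      (fun n => ?_) (hB.mul_left M))
  · simp only [integral_const_mul] at hs
    rw [heatOp, hs.tsum_eq]
    refine integral_congr_ae (.of_forall fun y => ?_)
    simp only [heatKer, ← tsum_mul_right]
    exact tsum_congr fun n => by ring
  · refine le_trans (le_of_eq ?_) (h f M hf hM n)
    rw [← integral_const_mul]
    refine integral_congr_ae (.of_forall fun y => ?_)
    simp only [norm_mul, Real.norm_of_nonneg (heatCoeff_pos ha hb t n).le, Real.norm_eq_abs,
      abs_mul]

lemma exists_heatOp_sub_le {a b t x : ℝ} (ha : -1 < a) (hb : -1 < b) (ht : 0 < t)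
    (hx : x ∈ Set.Ioo (-1 : ℝ) 1) : ∃ Z, 0 ≤ Z ∧ ∀ (f g : ℝ → ℝ) (M : ℝ),
      ContinuousOn f (Set.Icc (-1) 1) → ContinuousOn g (Set.Icc (-1) 1) →
        (∀ y ∈ Set.Icc (-1 : ℝ) 1, |f y - g y| ≤ M) →
        heatOp a b t f x ≤ heatOp a b t g x + M * Z := by
  obtain ⟨B, hB, hB0, h⟩ := exists_summable_bound_integral (t := t) ha hb ht hx
  refine ⟨∑' n, B n, tsum_nonneg hB0, fun f g M hf hg hM => ?_⟩
  have sg := summable_heatOp (t := t) ha hb ht hx hg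
  rw [heatOp, heatOp, ← tsum_mul_left, ← sg.tsum_add (hB.mul_left M)]
  refine (summable_heatOp ha hb ht hx hf).tsum_le_tsum (fun n => ?_) (sg.add (hB.mul_left M))
  have hp := (jacobiPoly a b n).continuous.continuousOn (s := Set.Icc (-1) 1)
  rw [← sub_le_iff_le_add', ← mul_sub, ← integral_sub (integrableOn_mul_wt ha hb (hp.fun_mul hf))
    (integrableOn_mul_wt ha hb (hp.fun_mul hg))]
  refine le_trans ?_ (h (fun y => f y - g y) M (hf.sub hg) hM n)
  refine (le_abs_self _).trans ?_
  rw [abs_mul, abs_mul, abs_of_nonneg (heatCoeff_pos ha hb t n).le]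
  refine mul_le_mul_of_nonneg_left ?_ (mul_nonneg (heatCoeff_pos ha hb t n).le (abs_nonneg _))
  refine (abs_integral_le_integral_abs).trans_eq ?_
  refine integral_congr_ae (.of_forall fun y => ?_)
  dsimp only
  congr 1
  ring

lemma heatOp_jacobiSum {a b : ℝ} (ha : -1 < a) (hb : -1 < b) (t x : ℝ)
    (I : Finset ℕ) (c : ℕ → ℝ) :
    heatOp a b t (fun y => (∑ n ∈ I, c n • jacobiPoly a b n).eval y) x =
      ∑ n ∈ I, c n * Real.exp (-t * (eigval a b n + bottom a b)) * (jacobiPoly a b n).eval x := by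
  have hI : ∀ n, ∫ y in Set.Icc (-1 : ℝ) 1, (jacobiPoly a b n).eval y *
      (∑ m ∈ I, c m • jacobiPoly a b m).eval y * wt a b y =
        if n ∈ I then c n * hJacobi a b n else 0 := by
    intro n
    have h1 : ∀ y, (jacobiPoly a b n).eval y * (∑ m ∈ I, c m • jacobiPoly a b m).eval y *
        wt a b y = ∑ m ∈ I, c m * ((jacobiPoly a b n).eval y * (jacobiPoly a b m).eval y *
          wt a b y) := by
      intro y
      simp only [eval_finsetSum, eval_smul, smul_eq_mul, Finset.mul_sum, Finset.sum_mul]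
      exact Finset.sum_congr rfl fun m _ => by ring
    simp only [h1]
    rw [integral_finsetSum _ fun m _ =>
      (integrableOn_mul_wt ha hb (by fun_prop)).const_mul _]
    simp only [integral_const_mul]
    split_ifs with hn
    · rw [Finset.sum_eq_single_of_mem n hn fun m _ hm => by
        rw [integral_jacobiPoly_mul_of_ne ha hb hm.symm, mul_zero], hJacobi_eq]
      simp only [sq]
    · refine Finset.sum_eq_zero fun m hm => ?_
      rw [integral_jacobiPoly_mul_of_ne ha hb (fun h => hn (by rwa [h])), mul_zero]
  rw [heatOp, tsum_eq_sum (s := I) fun n hn => by rw [hI, if_neg hn, mul_zero]]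
  refine Finset.sum_congr rfl fun n hn => ?_
  have := (hJacobi_pos ha hb n).ne'
  rw [hI, if_pos hn, heatCoeff]
  field_simp

lemma wt_add_two_mul (a b e : ℝ) {y : ℝ} (hy : y < 1) :
    wt (a + 2 * e) b y = (1 - y) ^ e * (1 - y) ^ e * wt a b y := by
  have h : 0 < 1 - y := sub_pos.mpr hy
  rw [wt, wt, two_mul, Real.rpow_add h, Real.rpow_add h]
  ring

lemma continuous_one_sub_rpow {e : ℝ} (he : 0 ≤ e) : Continuous fun y : ℝ => (1 - y) ^ e :=
  (continuous_const.sub continuous_id).rpow_const fun _ => Or.inr he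

/-- Comparison of the heat semigroups of type `(a + 2 e, b)` and `(a, b)`. -/
lemma heatOp_comparison {a b t e x : ℝ} (ha : -1 < a) (hb : -1 < b) (ht : 0 < t) (he : 0 < e)
    (hae : 0 ≤ a + e) (hx : x ∈ Set.Ioo (-1 : ℝ) 1) {ψ : ℝ → ℝ} (hψ : Continuous ψ)
    (hψ0 : ∀ y, 0 ≤ ψ y) :
    (1 - x) ^ e * heatOp (a + 2 * e) b t ψ x ≤ heatOp a b t (fun y => (1 - y) ^ e * ψ y) x := by
  have hA : -1 < a + 2 * e := by linarith
  have hcont := continuous_one_sub_rpow he.le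
  obtain ⟨Z, hZ0, hZ⟩ := exists_heatOp_sub_le (t := t) hA hb ht hx
  obtain ⟨Z', hZ0', hZ'⟩ := exists_heatOp_sub_le (t := t) ha hb ht hx
  have hΦ : ∀ y ∈ Set.Icc (-1 : ℝ) 1, 0 ≤ (1 - y) ^ e ∧ (1 - y) ^ e ≤ 2 ^ e := fun y hy =>
    ⟨Real.rpow_nonneg (by linarith [hy.2]) _,
      Real.rpow_le_rpow (by linarith [hy.2]) (by linarith [hy.1]) he.le⟩
  have key : ∀ η > 0, (1 - x) ^ e * heatOp (a + 2 * e) b t ψ x ≤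
      heatOp a b t (fun y => (1 - y) ^ e * ψ y) x +
        η * ((2 + 2 * 2 ^ e) * Z' + (1 - x) ^ e * (2 * Z)) := by
    intro η hη
    obtain ⟨p, hp⟩ := exists_polynomial_near_of_continuousOn (-1) 1 (fun y => ψ y + η)
      (by fun_prop) η hη
    obtain ⟨g, hg⟩ := exists_polynomial_near_of_continuousOn (-1) 1
      (fun y => (1 - y) ^ e * p.eval y + η) (by fun_prop) η hη
    obtain ⟨I, c, hpc⟩ := exists_sum_jacobiPoly hA hb p
    obtain ⟨I', c', hgc⟩ := exists_sum_jacobiPoly ha hb g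
    have h1 := heat_comparison_poly (t := t) (I := I) (I' := I') (c := c) (c' := c') ha hb ht.le
      he hae (fun y hy => ?_) (fun y hy => ?_) (Set.Ioo_subset_Icc_self hx)
    · rw [← heatOp_jacobiSum hA hb, ← heatOp_jacobiSum ha hb, ← hpc, ← hgc] at h1
      have h2 := hZ ψ (fun y => p.eval y) (2 * η) hψ.continuousOn (by fun_prop) fun y hy => by
        have := abs_lt.mp (hp y hy)
        rw [abs_le]
        constructor <;> linarith
      have h3 := hZ' (fun y => g.eval y) (fun y => (1 - y) ^ e * ψ y) ((2 + 2 * 2 ^ e) * η)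
        (by fun_prop) (by fun_prop) fun y hy => by
          have k1 := abs_lt.mp (hp y hy)
          have k2 := abs_lt.mp (hg y hy)
          obtain ⟨k3, k4⟩ := hΦ y hy
          have k5 : 0 ≤ (1 - y) ^ e * (p.eval y - ψ y) := mul_nonneg k3 (by linarith)
          have k6 : (1 - y) ^ e * (p.eval y - ψ y) ≤ 2 ^ e * (2 * η) :=
            mul_le_mul k4 (by linarith) (by linarith) (by positivity)
          rw [abs_le]
          constructor <;> nlinarith
      have h4 := mul_le_mul_of_nonneg_left h2 (hΦ x (Set.Ioo_subset_Icc_self hx)).1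
      linarith
    · rw [← hpc]
      have := abs_lt.mp (hp y hy)
      linarith [hψ0 y]
    · rw [← hpc, ← hgc]
      have := abs_lt.mp (hg y hy)
      linarith
  set N := (2 + 2 * 2 ^ e) * Z' + (1 - x) ^ e * (2 * Z)
  have hN : 0 ≤ N := by
    have := (hΦ x (Set.Ioo_subset_Icc_self hx)).1
    positivity
  refine le_of_forall_pos_le_add fun ε hε => (key (ε / (N + 1)) (by positivity)).trans ?_
  rw [div_mul_eq_mul_div]
  gcongr
  rw [div_le_iff₀ (by positivity)]
  nlinarith

/-- Pointwise comparison of the Jacobi heat kernels of type `(a + 2 e, b)` and `(a, b)`. -/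
lemma heatKer_comparison {a b t e x y : ℝ} (ha : -1 < a) (hb : -1 < b) (ht : 0 < t) (he : 0 < e)
    (hae : 0 ≤ a + e) (hx : x ∈ Set.Ioo (-1 : ℝ) 1) (hy : y ∈ Set.Ioo (-1 : ℝ) 1) :
    (1 - x) ^ e * (1 - y) ^ e * heatKer (a + 2 * e) b t x y ≤ heatKer a b t x y := by
  have hA : -1 < a + 2 * e := by linarith
  have hcont := continuous_one_sub_rpow he.le
  by_contra! hlt
  have hKA := continuousOn_heatKer hA hb ht hx
  have hKa := continuousOn_heatKer ha hb ht hx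
  have hF : ContinuousOn (fun z => (1 - x) ^ e * (1 - z) ^ e * heatKer (a + 2 * e) b t x z -
      heatKer a b t x z) (Set.Ioo (-1) 1) :=
    ((continuous_const.mul hcont).continuousOn.mul hKA).sub hKa
  have hev : ∀ᶠ z in nhds y, z ∈ Set.Ioo (-1 : ℝ) 1 ∧
      0 < (1 - x) ^ e * (1 - z) ^ e * heatKer (a + 2 * e) b t x z - heatKer a b t x z :=
    (isOpen_Ioo.eventually_mem hy).and
      (continuousAt_const.eventually_lt (hF.continuousAt (isOpen_Ioo.mem_nhds hy))
        (sub_pos.mpr hlt))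
  obtain ⟨r, hr, hball⟩ := Metric.nhds_basis_closedBall.eventually_iff.mp hev
  rw [Real.closedBall_eq_Icc] at hball
  set J := Set.Icc (y - r) (y + r)
  have hJ : J ⊆ Set.Ioo (-1 : ℝ) 1 := fun z hz => (hball hz).1
  have hψc : Continuous fun z => max 0 (r - |z - y|) := by fun_prop
  have h1 := heatOp_comparison ha hb ht he hae hx hψc fun z => le_max_left _ _
  rw [heatOp_eq_integral hA hb ht hx hψc.continuousOn,
    heatOp_eq_integral ha hb ht hx (by fun_prop)] at h1
  have hz : ∀ z ∈ Set.Icc (-1 : ℝ) 1 \ J, max 0 (r - |z - y|) = 0 := by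
    intro z hz
    refine max_eq_left (sub_nonpos.mpr ?_)
    by_contra! hlt'
    rw [abs_lt] at hlt'
    exact hz.2 ⟨by linarith, by linarith⟩
  have hres : ∀ f : ℝ → ℝ, (∀ z ∈ Set.Icc (-1 : ℝ) 1 \ J, f z = 0) →
      ∫ z in Set.Icc (-1 : ℝ) 1, f z = ∫ z in J, f z := fun f hf =>
    setIntegral_eq_of_subset_of_forall_sdiff_eq_zero measurableSet_Icc
      (hJ.trans Set.Ioo_subset_Icc_self) hf
  rw [hres, hres, ← integral_const_mul, ← sub_nonneg] at h1
  rotate_left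
  · exact fun z h => by rw [hz z h]; ring
  · exact fun z h => by rw [hz z h]; ring
  have hKA' := hKA.mono hJ
  have hKa' := hKa.mono hJ
  have hwA := (continuousOn_wt (a + 2 * e) b).mono hJ
  have hwa := (continuousOn_wt a b).mono hJ
  have i1 : IntegrableOn (fun z => heatKer a b t x z *
      ((1 - z) ^ e * max 0 (r - |z - y|) * wt a b z)) J :=
    (hKa'.mul ((hcont.mul hψc).continuousOn.mul hwa)).integrableOn_Icc
  have i2 : IntegrableOn (fun z => (1 - x) ^ e * (heatKer (a + 2 * e) b t x z *
      (max 0 (r - |z - y|) * wt (a + 2 * e) b z))) J :=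
    (continuousOn_const.mul (hKA'.mul (hψc.continuousOn.mul hwA))).integrableOn_Icc
  rw [← integral_sub i1 i2] at h1
  have hpos : 0 < ∫ z in (y - r)..(y + r), -(heatKer a b t x z *
      ((1 - z) ^ e * max 0 (r - |z - y|) * wt a b z) - (1 - x) ^ e *
      (heatKer (a + 2 * e) b t x z * (max 0 (r - |z - y|) * wt (a + 2 * e) b z))) := by
    refine intervalIntegral.intervalIntegral_pos_of_pos_on ?_ (fun z hzr => ?_) (by linarith)
    · rw [intervalIntegrable_iff_integrableOn_Icc_of_le (by linarith)]
      exact (i1.sub i2).neg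
    · obtain ⟨k1, k2⟩ := hball (Set.Ioo_subset_Icc_self hzr)
      have k3 : 0 < r - |z - y| :=
        sub_pos.mpr (abs_lt.mpr ⟨by linarith [hzr.1], by linarith [hzr.2]⟩)
      have k4 : 0 < (1 - z) ^ e := Real.rpow_pos_of_pos (by linarith [k1.2]) _
      have k5 := mul_pos (mul_pos (mul_pos k2 k4) k3) (wt_pos a b k1)
      rw [max_eq_right k3.le, wt_add_two_mul a b e k1.2]
      linarith
  rw [intervalIntegral.integral_of_le (by linarith), ← integral_Icc_eq_integral_Ioc,
    integral_neg] at hpos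
  linarith

/-- The prefactor relating the kernel of the function setting to `heatKer`. -/
noncomputable def prefactor (a b θ : ℝ) : ℝ :=
  Real.sin (θ / 2) ^ (a + 1 / 2) * Real.cos (θ / 2) ^ (b + 1 / 2) * 2 ^ ((a + b + 1) / 2)

lemma cos_mem_Ioo {θ : ℝ} (hθ : θ ∈ Set.Ioo 0 π) : Real.cos θ ∈ Set.Ioo (-1 : ℝ) 1 := by
  constructor
  · rw [← Real.cos_pi]
    exact Real.cos_lt_cos_of_nonneg_of_le_pi hθ.1.le le_rfl hθ.2
  · rw [← Real.cos_zero]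
    exact Real.cos_lt_cos_of_nonneg_of_le_pi le_rfl hθ.2.le hθ.1

lemma sin_half_pos {θ : ℝ} (hθ : θ ∈ Set.Ioo 0 π) : 0 < Real.sin (θ / 2) :=
  Real.sin_pos_of_pos_of_lt_pi (by linarith [hθ.1]) (by linarith [hθ.1, hθ.2])

lemma cos_half_pos {θ : ℝ} (hθ : θ ∈ Set.Ioo 0 π) : 0 < Real.cos (θ / 2) :=
  Real.cos_pos_of_mem_Ioo ⟨by linarith [hθ.1, Real.pi_pos], by linarith [hθ.2]⟩

lemma prefactor_pos (a b : ℝ) {θ : ℝ} (hθ : θ ∈ Set.Ioo 0 π) : 0 < prefactor a b θ := by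
  have := sin_half_pos hθ
  have := cos_half_pos hθ
  unfold prefactor
  positivity

lemma prefactor_add_two_mul (a b e : ℝ) {θ : ℝ} (hθ : θ ∈ Set.Ioo 0 π) :
    prefactor (a + 2 * e) b θ = prefactor a b θ * (1 - Real.cos θ) ^ e := by
  have hs := sin_half_pos hθ
  have h1 : 1 - Real.cos θ = 2 * (Real.sin (θ / 2) * Real.sin (θ / 2)) := by
    have h := Real.cos_two_mul (θ / 2)
    rw [mul_div_cancel₀ θ two_ne_zero] at h
    nlinarith [Real.sin_sq_add_cos_sq (θ / 2)]
  have h2 : a + 2 * e + 1 / 2 = a + 1 / 2 + e + e := by ring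
  have h3 : (a + 2 * e + b + 1) / 2 = (a + b + 1) / 2 + e := by ring
  rw [h1, Real.mul_rpow two_pos.le (by positivity), Real.mul_rpow hs.le hs.le, prefactor,
    prefactor, h2, h3, Real.rpow_add hs, Real.rpow_add hs, Real.rpow_add two_pos]
  ring

lemma funHeat_eq {a b : ℝ} (ha : -1 < a) (hb : -1 < b) (t : ℝ) {θ φ : ℝ}
    (hθ : θ ∈ Set.Ioo 0 π) (hφ : φ ∈ Set.Ioo 0 π) :
    funHeat a b t θ φ =
      prefactor a b θ * prefactor a b φ * heatKer a b t (Real.cos θ) (Real.cos φ) := by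
  rw [funHeat, heatKer, ← tsum_mul_left]
  refine tsum_congr fun n => ?_
  have hh := hJacobi_pos ha hb n
  have h1 : ((n : ℝ) + (a + b + 1) / 2) ^ 2 = eigval a b n + bottom a b := by
    rw [eigval, bottom]; ring
  have h2 : hJacobi a b n ^ (-(1 / 2 : ℝ)) * hJacobi a b n ^ (-(1 / 2 : ℝ)) =
      (hJacobi a b n)⁻¹ := by
    rw [← Real.rpow_add hh, ← Real.rpow_neg_one]; norm_num
  have h3 : heatCoeff a b t n = Real.exp (-t * (eigval a b n + bottom a b)) *
      (hJacobi a b n ^ (-(1 / 2 : ℝ)) * hJacobi a b n ^ (-(1 / 2 : ℝ))) := by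
    rw [heatCoeff, h2, div_eq_mul_inv]
  rw [h1, phiFn, phiFn, trigP, trigP, jacobiP_eq_eval a b n (cos_mem_Ioo hθ),
    jacobiP_eq_eval a b n (cos_mem_Ioo hφ), h3, prefactor, prefactor]
  ring

lemma phiFn_zero (a b : ℝ) (n : ℕ) : phiFn a b n 0 = 0 := by
  rw [phiFn, trigP, jacobiP, zero_div, Real.sin_zero, Real.cos_zero, sub_self]
  by_cases h : a = -(1 / 2)
  · rw [h, neg_neg, Real.zero_rpow (by norm_num : (1 / 2 : ℝ) ≠ 0)]
    ring
  · rw [Real.zero_rpow fun h' => h (by linarith)]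
    ring

lemma phiFn_pi (a b : ℝ) (n : ℕ) : phiFn a b n π = 0 := by
  rw [phiFn, trigP, jacobiP, Real.cos_pi_div_two, Real.cos_pi, add_neg_cancel]
  by_cases h : b = -(1 / 2)
  · rw [h, neg_neg, Real.zero_rpow (by norm_num : (1 / 2 : ℝ) ≠ 0)]
    ring
  · rw [Real.zero_rpow fun h' => h (by linarith)]
    ring

lemma jacobiP_neg (a b : ℝ) (n : ℕ) (x : ℝ) : jacobiP a b n (-x) = (-1) ^ n * jacobiP b a n x := by
  have h : (fun y : ℝ => (1 - y) ^ (b + (n : ℝ)) * (1 + y) ^ (a + (n : ℝ))) =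
      fun y => (fun z : ℝ => (1 - z) ^ (a + (n : ℝ)) * (1 + z) ^ (b + (n : ℝ))) (-y) := by
    funext y
    simp only [sub_neg_eq_add, ← sub_eq_add_neg]
    ring
  have h1 := iteratedDeriv_comp_neg n
    (fun z : ℝ => (1 - z) ^ (a + (n : ℝ)) * (1 + z) ^ (b + (n : ℝ))) x
  rw [jacobiP, jacobiP, h, h1, smul_eq_mul, sub_neg_eq_add, ← sub_eq_add_neg]
  have h2 : ((-1 : ℝ) ^ n) * (-1) ^ n = 1 := by rw [← mul_pow]; norm_num
  linear_combination (-(((-1 : ℝ) ^ n / ((2 : ℝ) ^ n * (n.factorial : ℝ))) * (1 + x) ^ (-a) *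
    (1 - x) ^ (-b) * iteratedDeriv n
      (fun y : ℝ => (1 - y) ^ (a + (n : ℝ)) * (1 + y) ^ (b + (n : ℝ))) (-x))) * h2

lemma hJacobi_comm (a b : ℝ) (n : ℕ) : hJacobi a b n = hJacobi b a n := by
  have h2 : ((-1 : ℝ) ^ n) * (-1) ^ n = 1 := by rw [← mul_pow]; norm_num
  rw [hJacobi, hJacobi, integral_Icc_eq_integral_Ioc, integral_Icc_eq_integral_Ioc,
    ← intervalIntegral.integral_of_le (by norm_num),
    ← intervalIntegral.integral_of_le (by norm_num)]
  have := intervalIntegral.integral_comp_neg (a := -1) (b := 1)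
    fun x => jacobiP a b n x ^ 2 * (1 - x) ^ a * (1 + x) ^ b
  rw [neg_neg] at this
  rw [← this]
  refine intervalIntegral.integral_congr fun x _ => ?_
  simp only [jacobiP_neg, sub_neg_eq_add, ← sub_eq_add_neg]
  linear_combination (jacobiP b a n x ^ 2 * (1 + x) ^ a * (1 - x) ^ b) * h2

lemma phiFn_pi_sub (a b : ℝ) (n : ℕ) (θ : ℝ) :
    phiFn a b n (π - θ) = (-1) ^ n * phiFn b a n θ := by
  rw [phiFn, phiFn, trigP, trigP, sub_div, Real.sin_pi_div_two_sub, Real.cos_pi_div_two_sub,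
    Real.cos_pi_sub, jacobiP_neg, hJacobi_comm, add_comm a b]
  ring

lemma funHeat_pi_sub (a b t θ φ : ℝ) :
    funHeat a b t (π - θ) (π - φ) = funHeat b a t θ φ := by
  rw [funHeat, funHeat]
  refine tsum_congr fun n => ?_
  have h2 : ((-1 : ℝ) ^ n) * (-1) ^ n = 1 := by rw [← mul_pow]; norm_num
  rw [phiFn_pi_sub, phiFn_pi_sub, add_comm a b]
  linear_combination (Real.exp (-t * ((n : ℝ) + (b + a + 1) / 2) ^ 2) * phiFn b a n θ *
    phiFn b a n φ) * h2

/-- The kernel of the function setting is monotone in its first parameter. -/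
lemma funHeat_add_left_le {a b ε t θ φ : ℝ} (ha : -1 < a) (hb : -1 < b) (hε : 0 ≤ ε)
    (haε : -ε / 2 ≤ a) (hθ : θ ∈ Set.Icc 0 π) (hφ : φ ∈ Set.Icc 0 π) (ht : 0 < t) :
    funHeat (a + ε) b t θ φ ≤ funHeat a b t θ φ := by
  rcases hε.eq_or_lt with rfl | hε
  · rw [add_zero]
  rcases eq_or_ne θ 0 with rfl | h1
  · simp [funHeat, phiFn_zero]
  rcases eq_or_ne θ π with rfl | h2
  · simp [funHeat, phiFn_pi]
  rcases eq_or_ne φ 0 with rfl | h3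
  · simp [funHeat, phiFn_zero]
  rcases eq_or_ne φ π with rfl | h4
  · simp [funHeat, phiFn_pi]
  have hθ' : θ ∈ Set.Ioo 0 π := ⟨hθ.1.lt_of_ne' h1, hθ.2.lt_of_ne h2⟩
  have hφ' : φ ∈ Set.Ioo 0 π := ⟨hφ.1.lt_of_ne' h3, hφ.2.lt_of_ne h4⟩
  obtain ⟨e, rfl⟩ : ∃ e, ε = 2 * e := ⟨ε / 2, by ring⟩
  rw [funHeat_eq (by linarith) hb t hθ' hφ', funHeat_eq ha hb t hθ' hφ',
    prefactor_add_two_mul a b e hθ', prefactor_add_two_mul a b e hφ']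
  refine le_trans (le_of_eq ?_) (mul_le_mul_of_nonneg_left
    (heatKer_comparison ha hb ht (by linarith : 0 < e) (by linarith) (cos_mem_Ioo hθ')
      (cos_mem_Ioo hφ')) (mul_pos (prefactor_pos a b hθ') (prefactor_pos a b hφ')).le)
  ring

lemma funHeat_add_right_le {a b δ t θ φ : ℝ} (ha : -1 < a) (hb : -1 < b) (hδ : 0 ≤ δ)
    (hbδ : -δ / 2 ≤ b) (hθ : θ ∈ Set.Icc 0 π) (hφ : φ ∈ Set.Icc 0 π) (ht : 0 < t) :
    funHeat a (b + δ) t θ φ ≤ funHeat a b t θ φ := by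
  rw [← funHeat_pi_sub (b + δ) a, ← funHeat_pi_sub b a]
  exact funHeat_add_left_le hb ha hδ hbδ ⟨by linarith [hθ.2], by linarith [hθ.1]⟩
    ⟨by linarith [hφ.2], by linarith [hφ.1]⟩ ht

lemma funHeat_add_le {a b ε δ t θ φ : ℝ} (ha : -1 < a) (hb : -1 < b) (hε : 0 ≤ ε) (hδ : 0 ≤ δ)
    (haε : -ε / 2 ≤ a) (hbδ : -δ / 2 ≤ b) (hθ : θ ∈ Set.Icc 0 π) (hφ : φ ∈ Set.Icc 0 π)
    (ht : 0 < t) : funHeat (a + ε) (b + δ) t θ φ ≤ funHeat a b t θ φ :=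
  (funHeat_add_right_le (by linarith) hb hδ hbδ hθ hφ ht).trans
    (funHeat_add_left_le ha hb hε haε hθ hφ ht)

end JacobiHeat

/-- Corollary 3.6 in the 'function' setting: 𝔾_t^{(α+ε,β+δ)} ≤ 𝔾_t^{(α,β)} for ε, δ ≥ 0
with α ≥ -ε/2, β ≥ -δ/2; in particular 𝔾_t^{(α,β)} is nonincreasing in each parameter
α ≥ 0 and β ≥ 0. -/
theorem stmt14 (a b ε δ : ℝ) (ha : -1 < a) (hb : -1 < b) (hε : 0 ≤ ε) (hδ : 0 ≤ δ)
    (haε : -ε/2 ≤ a) (hbδ : -δ/2 ≤ b) :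
    (∀ θ ∈ Set.Icc 0 π, ∀ φ ∈ Set.Icc 0 π, ∀ t : ℝ, 0 < t →
      funHeat (a + ε) (b + δ) t θ φ ≤ funHeat a b t θ φ) ∧
    (∀ a₁ b₁ a₂ b₂ : ℝ, 0 ≤ a₁ → a₁ ≤ a₂ → 0 ≤ b₁ → b₁ ≤ b₂ →
      ∀ θ ∈ Set.Icc 0 π, ∀ φ ∈ Set.Icc 0 π, ∀ t : ℝ, 0 < t →
        funHeat a₂ b₂ t θ φ ≤ funHeat a₁ b₁ t θ φ) := by
  refine ⟨fun θ hθ φ hφ t ht => JacobiHeat.funHeat_add_le ha hb hε hδ haε hbδ hθ hφ ht, ?_⟩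
  intro a₁ b₁ a₂ b₂ ha₁ ha₂ hb₁ hb₂ θ hθ φ hφ t ht
  have h := JacobiHeat.funHeat_add_le (a := a₁) (b := b₁) (ε := a₂ - a₁) (δ := b₂ - b₁)
    (by linarith) (by linarith) (by linarith) (by linarith) (by linarith) (by linarith) hθ hφ ht
  rwa [add_sub_cancel, add_sub_cancel] at h
end
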